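/- Lemma 2.4(i): Let v be a classical solution of v_t = v_rr + ((m−1)/r) v_r − (b(r,t)/r²) v on [0,R] × (t1,t2), not identically zero, satisfying the boundary condition (1.5). Then for any t0 ∈ (t1,t2) there exists ε0 > 0 such that Z(v(·,t)) < ∞ for every t ∈ (t0 − ε0, t0). -/

import Mathlib

open Set Filter
open MeasureTheory
open scoped Topology ContDiff

/-!
With `s = (m - 1) / 2` the substitution `u = r ^ s * v` removes the first-order term: `u` solves
`u_t = u_rr - s (s + 1) / r ^ 2 * u + f`, where `f` is bounded by a multiple of `|u| / r`.
If `v (·, T)` had infinitely many zeros, then, being smooth, it would vanish to infinite order at an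
accumulation point `ρ`, and so would `u (·, T)`. Against this stands Poon's frequency function: for
the backward heat kernel centred at `(ρ, T)`, the ratio of the weighted Dirichlet energy to the
weighted height of `u` is almost monotone, the sign of `s (s + 1)` and Dirichlet conditions at both
ends being favourable. Hence the height decays at most polynomially as `t → T` unless `u` vanishes
before `T`; infinite order vanishing leaves only the latter, and the energy inequality for
`∫ u ^ 2` carries the zero forward to all times.

If `v` does not vanish at `r = R`, the same argument applies to `(R - r) * u`, which satisfies the
Dirichlet condition; the conclusion that it vanishes identically contradicts `v (R, ·) ≠ 0`.
-/

section Calculus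

/-- The last hypothesis says that `(log (f / g))' ≤ γ`, cleared of denominators so that `f` may
vanish. -/
theorem div_le_exp_mul_div {f g f' g' : ℝ → ℝ} {γ p q : ℝ} (hpq : p ≤ q)
    (hf : ∀ t ∈ Icc p q, HasDerivAt f (f' t) t) (hg : ∀ t ∈ Icc p q, HasDerivAt g (g' t) t)
    (hg0 : ∀ t ∈ Icc p q, 0 < g t)
    (h : ∀ t ∈ Icc p q, f' t * g t - f t * g' t ≤ γ * f t * g t) :
    f q / g q ≤ Real.exp (γ * (q - p)) * (f p / g p) := by
  have hder : ∀ t ∈ Icc p q, HasDerivAt (fun t => Real.exp (-(γ * t)) * (f t / g t))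
      (Real.exp (-(γ * t)) * ((f' t * g t - f t * g' t - γ * f t * g t) / g t ^ 2)) t := by
    intro t ht
    have hexp : HasDerivAt (fun t => Real.exp (-(γ * t))) (Real.exp (-(γ * t)) * -(γ * 1)) t :=
      ((hasDerivAt_id t).const_mul γ).neg.exp
    have hgt := hg0 t ht
    have hfg : HasDerivAt (fun t => f t / g t) ((f' t * g t - f t * g' t) / g t ^ 2) t :=
      (hf t ht).div (hg t ht) hgt.ne'
    refine (hexp.mul hfg).congr_deriv ?_
    field_simp
    ring
  have hanti : AntitoneOn (fun t => Real.exp (-(γ * t)) * (f t / g t)) (Icc p q) := by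
    refine antitoneOn_of_deriv_nonpos (convex_Icc p q)
      (fun t ht => (hder t ht).continuousAt.continuousWithinAt)
      (fun t ht => (hder t (interior_subset ht)).differentiableAt.differentiableWithinAt)
      fun t ht => ?_
    rw [(hder t (interior_subset ht)).deriv]
    exact mul_nonpos_of_nonneg_of_nonpos (Real.exp_pos _).le
      (div_nonpos_of_nonpos_of_nonneg (sub_nonpos.2 (h t (interior_subset ht))) (sq_nonneg _))
  have hle := hanti (left_mem_Icc.2 hpq) (right_mem_Icc.2 hpq) hpq
  calc f q / g q = Real.exp (γ * q) * (Real.exp (-(γ * q)) * (f q / g q)) := by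
        rw [← mul_assoc, ← Real.exp_add]; simp
    _ ≤ Real.exp (γ * q) * (Real.exp (-(γ * p)) * (f p / g p)) := by gcongr
    _ = Real.exp (γ * (q - p)) * (f p / g p) := by
        rw [← mul_assoc, ← Real.exp_add]; ring_nf

theorem eq_zero_of_hasDerivAt_of_eqOn_zero {f : ℝ → ℝ} {f' t : ℝ} {J : Set ℝ}
    (hf : HasDerivAt f f' t) (hJ : J ∈ 𝓝 t) (h0 : EqOn f 0 J) : f' = 0 :=
  hf.unique ((hasDerivAt_const t 0).congr_of_eventuallyEq (h0.eventuallyEq_of_mem hJ))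

theorem continuousOn_slice {F : ℝ → ℝ → ℝ} {s J : Set ℝ}
    (hF : ContinuousOn (fun z : ℝ × ℝ => F z.1 z.2) (s ×ˢ J)) {t : ℝ} (ht : t ∈ J) :
    ContinuousOn (fun x => F x t) s :=
  hF.comp (f := fun x => (x, t)) (by fun_prop) fun _ hx => ⟨hx, ht⟩

theorem hasDerivAt_intervalIntegral_of_continuousOn {F F' : ℝ → ℝ → ℝ} {a b : ℝ} {J : Set ℝ}
    (hab : a ≤ b) (hJ : IsOpen J)
    (hF : ContinuousOn (fun z : ℝ × ℝ => F z.1 z.2) (Icc a b ×ˢ J))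
    (hF' : ContinuousOn (fun z : ℝ × ℝ => F' z.1 z.2) (Icc a b ×ˢ J))
    (hderiv : ∀ x ∈ Icc a b, ∀ t ∈ J, HasDerivAt (F x) (F' x t) t) {t : ℝ} (ht : t ∈ J) :
    HasDerivAt (fun t => ∫ x in a..b, F x t) (∫ x in a..b, F' x t) t := by
  obtain ⟨K, hK, hKt, hKJ⟩ := exists_compact_subset hJ ht
  have hK' : K ∈ 𝓝 t := mem_interior_iff_mem_nhds.1 hKt
  obtain ⟨M, hM⟩ := (isCompact_Icc.prod hK).exists_bound_of_continuousOn
    (hF'.mono (prod_mono_right hKJ))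
  have hsub : uIoc a b ⊆ Icc a b := uIoc_of_le hab ▸ Ioc_subset_Icc_self
  refine (intervalIntegral.hasDerivAt_integral_of_dominated_loc_of_deriv_le
    (F := fun t x => F x t) (F' := fun t x => F' x t) (bound := fun _ => M) hK'
    ?_ ?_ ?_ ?_ ?_ ?_).2
  · filter_upwards [hK'] with s hs
    exact ((continuousOn_slice hF (hKJ hs)).mono hsub).aestronglyMeasurable measurableSet_uIoc
  · exact (continuousOn_slice hF ht).intervalIntegrable_of_Icc hab
  · exact ((continuousOn_slice hF' ht).mono hsub).aestronglyMeasurable measurableSet_uIoc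
  · exact .of_forall fun x hx s hs => hM (x, s) ⟨hsub hx, hs⟩
  · exact intervalIntegrable_const
  · exact .of_forall fun x hx s hs => hderiv x (hsub hx) s (hKJ hs)

theorem abs_le_mul_of_abs_deriv_le {f f' : ℝ → ℝ} {K r : ℝ} (hr : 0 ≤ r) (h0 : f 0 = 0)
    (hf : ∀ x ∈ Icc 0 r, HasDerivWithinAt f (f' x) (Icc 0 r) x)
    (hK : ∀ x ∈ Icc 0 r, |f' x| ≤ K) : |f r| ≤ K * r := by
  simpa [h0, abs_of_nonneg hr] using (convex_Icc 0 r).norm_image_sub_le_of_norm_hasDerivWithin_le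
    hf hK (left_mem_Icc.2 hr) (right_mem_Icc.2 hr)

end Calculus

section Flatness

/-- `f` vanishes to infinite order at `ρ` within `s`; the bounds hold on all of `s`, not only
near `ρ`. -/
def FlatWithinAt (f : ℝ → ℝ) (s : Set ℝ) (ρ : ℝ) : Prop :=
  ∀ n : ℕ, ∃ B, ∀ x ∈ s, |f x| ≤ B * |x - ρ| ^ n

variable {f : ℝ → ℝ} {a b ρ : ℝ}

theorem FlatWithinAt.bdd_mul {g : ℝ → ℝ} {s : Set ℝ} {M : ℝ} (hf : FlatWithinAt f s ρ)
    (hg : ∀ x ∈ s, |g x| ≤ M) : FlatWithinAt (fun x => g x * f x) s ρ := by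
  intro n
  obtain ⟨B, hB⟩ := hf n
  refine ⟨M * B, fun x hx => ?_⟩
  rw [abs_mul, mul_assoc]
  exact mul_le_mul (hg x hx) (hB x hx) (abs_nonneg _) ((abs_nonneg _).trans (hg x hx))

theorem mem_zeros_of_accPt (hf : ContinuousOn f (Icc a b))
    (hacc : AccPt ρ (𝓟 {x ∈ Icc a b | f x = 0})) : ρ ∈ {x ∈ Icc a b | f x = 0} := by
  have hclosed : IsClosed {x ∈ Icc a b | f x = 0} :=
    hf.preimage_isClosed_of_isClosed isClosed_Icc isClosed_singleton
  exact hclosed.closure_subset hacc.clusterPt.mem_closure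

theorem accPt_zeros_derivWithin (hf : DifferentiableOn ℝ f (Icc a b))
    (hacc : AccPt ρ (𝓟 {x ∈ Icc a b | f x = 0})) :
    AccPt ρ (𝓟 {x ∈ Icc a b | derivWithin f (Icc a b) x = 0}) := by
  obtain ⟨hρ, hfρ⟩ := mem_zeros_of_accPt hf.continuousOn hacc
  rw [accPt_iff_nhds] at hacc ⊢
  intro U hU
  obtain ⟨ε, hε, hball⟩ := Metric.mem_nhds_iff.1 hU
  obtain ⟨y, ⟨hyU, hy, hfy⟩, hne⟩ := hacc _ (Metric.ball_mem_nhds ρ hε)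
  have hsub : Icc (min y ρ) (max y ρ) ⊆ Icc a b := ordConnected_Icc.uIcc_subset hy hρ
  obtain ⟨z, hz, hfz⟩ : ∃ z ∈ Ioo (min y ρ) (max y ρ), derivWithin f (Icc a b) z = 0 := by
    refine exists_hasDerivAt_eq_zero (min_lt_max.2 hne) (hf.continuousOn.mono hsub) ?_
      fun z hz => ?_
    · rw [min_rec' (f · = 0) hfy hfρ, max_rec' (f · = 0) hfy hfρ]
    · have hmem : Icc a b ∈ 𝓝 z := mem_of_superset (Icc_mem_nhds hz.1 hz.2) hsub
      exact (hf z (mem_of_mem_nhds hmem)).hasDerivWithinAt.hasDerivAt hmem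
  have hzU : z ∈ Metric.ball ρ ε := (convex_ball ρ ε).ordConnected.uIcc_subset hyU
    (Metric.mem_ball_self hε) (Ioo_subset_Icc_self hz)
  refine ⟨z, ⟨hball hzU, hsub (Ioo_subset_Icc_self hz), hfz⟩, fun h => ?_⟩
  rcases le_total y ρ with hle | hle
  · exact (hz.2.trans_eq (max_eq_right hle)).ne h
  · exact ((min_eq_right hle).symm.trans_lt hz.1).ne' h

theorem abs_le_mul_pow_succ_of_abs_derivWithin_le {B : ℝ} {n : ℕ}
    (hf : DifferentiableOn ℝ f (Icc a b)) (hρ : ρ ∈ Icc a b) (hfρ : f ρ = 0) (hB0 : 0 ≤ B)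
    (hB : ∀ x ∈ Icc a b, |derivWithin f (Icc a b) x| ≤ B * |x - ρ| ^ n) {x : ℝ}
    (hx : x ∈ Icc a b) : |f x| ≤ B * |x - ρ| ^ (n + 1) := by
  have hsub : uIcc ρ x ⊆ Icc a b := ordConnected_Icc.uIcc_subset hρ hx
  have hle := (convex_uIcc ρ x).norm_image_sub_le_of_norm_hasDerivWithin_le
    (f := f) (C := B * |x - ρ| ^ n)
    (fun y hy => (hf y (hsub hy)).hasDerivWithinAt.mono hsub)
    (fun y hy => (hB y (hsub hy)).trans <| by
      gcongr ?_ * ?_ ^ n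
      exact abs_sub_left_of_mem_uIcc hy) left_mem_uIcc right_mem_uIcc
  simpa [hfρ, pow_succ, mul_assoc] using hle

theorem exists_abs_le_mul_pow_of_accPt_zeros (hab : a < b) (n : ℕ) :
    ∀ f : ℝ → ℝ, ContDiffOn ℝ ∞ f (Icc a b) → AccPt ρ (𝓟 {x ∈ Icc a b | f x = 0}) →
      ∃ B, 0 ≤ B ∧ ∀ x ∈ Icc a b, |f x| ≤ B * |x - ρ| ^ n := by
  induction n with
  | zero =>
    intro f hf _
    obtain ⟨B, hB⟩ := isCompact_Icc.exists_bound_of_continuousOn hf.continuousOn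
    exact ⟨|B|, abs_nonneg _, fun x hx => by simpa using (hB x hx).trans (le_abs_self B)⟩
  | succ n ih =>
    intro f hf hacc
    have hdiff : DifferentiableOn ℝ f (Icc a b) := hf.differentiableOn (by simp)
    obtain ⟨hρ, hfρ⟩ := mem_zeros_of_accPt hf.continuousOn hacc
    obtain ⟨B, hB0, hB⟩ := ih _ (hf.derivWithin (uniqueDiffOn_Icc hab) (by simp))
      (accPt_zeros_derivWithin hdiff hacc)
    exact ⟨B, hB0, fun x hx => abs_le_mul_pow_succ_of_abs_derivWithin_le hdiff hρ hfρ hB0 hB hx⟩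

theorem flatWithinAt_of_accPt_zeros (hab : a < b) (hf : ContDiffOn ℝ ∞ f (Icc a b))
    (hacc : AccPt ρ (𝓟 {x ∈ Icc a b | f x = 0})) : FlatWithinAt f (Icc a b) ρ := fun n =>
  (exists_abs_le_mul_pow_of_accPt_zeros hab n f hf hacc).imp fun _ hB => hB.2

end Flatness

section HeatKernel

/-- The one-dimensional heat kernel `exp (-z² / (4τ)) / √τ`, without the constant `1 / √(4π)`. It
is the weight of all integrals below, evaluated at `τ = T - t`, which turns it into a solution of
the backward heat equation. -/
noncomputable def heatKernel (τ z : ℝ) : ℝ := Real.exp (-(z ^ 2 / (4 * τ))) / √τ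

variable {τ z : ℝ}

theorem heatKernel_pos (hτ : 0 < τ) : 0 < heatKernel τ z :=
  div_pos (Real.exp_pos _) (Real.sqrt_pos.2 hτ)

theorem hasDerivAt_heatKernel_space :
    HasDerivAt (heatKernel τ) (-(z / (2 * τ)) * heatKernel τ z) z := by
  have hquad : HasDerivAt (fun z : ℝ => -(z ^ 2 / (4 * τ))) (-(2 * z / (4 * τ))) z := by
    simpa using ((hasDerivAt_pow 2 z).div_const (4 * τ)).fun_neg
  refine (hquad.exp.div_const (√τ)).congr_deriv ?_
  unfold heatKernel
  ring

theorem hasDerivAt_heatKernel_time (hτ : 0 < τ) :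
    HasDerivAt (fun τ => heatKernel τ z)
      (((z / (2 * τ)) ^ 2 - 1 / (2 * τ)) * heatKernel τ z) τ := by
  have hlin : HasDerivAt (fun τ : ℝ => 4 * τ) 4 τ := by simpa using (hasDerivAt_id τ).const_mul 4
  have hquad : HasDerivAt (fun τ : ℝ => -(z ^ 2 / (4 * τ))) ((z / (2 * τ)) ^ 2) τ := by
    refine ((hasDerivAt_const τ (z ^ 2)).div hlin (by positivity)).neg.congr_deriv ?_
    field_simp
    ring
  refine (hquad.exp.div (Real.hasDerivAt_sqrt hτ.ne') (Real.sqrt_pos.2 hτ).ne').congr_deriv ?_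
  have hsq : √τ ^ 2 = τ := Real.sq_sqrt hτ.le
  have := Real.sqrt_pos.2 hτ
  unfold heatKernel
  field_simp
  rw [hsq]
  field_simp

theorem continuousOn_heatKernel :
    ContinuousOn (fun p : ℝ × ℝ => heatKernel p.1 p.2) (Ioi 0 ×ˢ univ) := by
  unfold heatKernel
  refine ContinuousOn.div (by fun_prop (disch := rintro p ⟨hp, -⟩; exact (mul_pos four_pos hp).ne'))
    (by fun_prop) fun p hp => (Real.sqrt_pos.2 hp.1).ne'

theorem heatKernel_le {σ : ℝ} (hσ : 0 < σ) (hστ : σ ≤ τ) : heatKernel τ z ≤ 1 / √σ := by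
  have hτ := hσ.trans_le hστ
  unfold heatKernel
  gcongr
  exact Real.exp_le_one_iff.2 (neg_nonpos.2 (by positivity))

theorem le_heatKernel {R σ₀ σ₁ : ℝ} (hσ : 0 < σ₀) (h₀ : σ₀ ≤ τ) (h₁ : τ ≤ σ₁) (hz : |z| ≤ R) :
    Real.exp (-(R ^ 2 / (4 * σ₀))) / √σ₁ ≤ heatKernel τ z := by
  have hτ := hσ.trans_le h₀
  have hz2 : z ^ 2 ≤ R ^ 2 := sq_abs z ▸ pow_le_pow_left₀ (abs_nonneg z) hz 2
  unfold heatKernel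
  gcongr

theorem pow_mul_heatKernel_le (hτ : 0 < τ) (n : ℕ) :
    (z ^ 2) ^ n * heatKernel τ z ≤ n.factorial * (4 * τ) ^ n / √τ := by
  have hexp := Real.pow_div_factorial_le_exp (x := z ^ 2 / (4 * τ)) (by positivity) n
  unfold heatKernel
  rw [mul_div_assoc', Real.exp_neg, ← div_eq_mul_inv]
  refine div_le_div_of_nonneg_right ?_ (Real.sqrt_nonneg τ)
  rw [div_le_iff₀ (Real.exp_pos _)]
  calc (z ^ 2) ^ n = n.factorial * (4 * τ) ^ n * ((z ^ 2 / (4 * τ)) ^ n / n.factorial) := by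
        field_simp
        rw [← mul_pow]
        field_simp
    _ ≤ _ := by gcongr

end HeatKernel

section GaussIntegral

/-- The integral of `f` over `[0, R]` against the heat kernel centred at `ρ`. -/
noncomputable def gaussIntegral (R ρ τ : ℝ) (f : ℝ → ℝ) : ℝ :=
  ∫ x in (0 : ℝ)..R, f x * heatKernel τ (x - ρ)

variable {R ρ τ : ℝ} {f g h : ℝ → ℝ}

theorem continuous_heatKernel_sub (hτ : 0 < τ) : Continuous fun x => heatKernel τ (x - ρ) :=
  continuousOn_heatKernel.comp_continuous (f := fun x => (τ, x - ρ)) (by fun_prop)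
    fun _ => ⟨hτ, trivial⟩

theorem intervalIntegrable_mul_heatKernel (hR : 0 ≤ R) (hτ : 0 < τ)
    (hf : ContinuousOn f (Icc 0 R)) :
    IntervalIntegrable (fun x => f x * heatKernel τ (x - ρ)) volume 0 R :=
  (hf.mul (continuous_heatKernel_sub hτ).continuousOn).intervalIntegrable_of_Icc hR

theorem gaussIntegral_const_mul (c : ℝ) :
    gaussIntegral R ρ τ (fun x => c * f x) = c * gaussIntegral R ρ τ f := by
  simp only [gaussIntegral, mul_assoc, intervalIntegral.integral_const_mul]

theorem gaussIntegral_add (hR : 0 ≤ R) (hτ : 0 < τ) (hf : ContinuousOn f (Icc 0 R))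
    (hg : ContinuousOn g (Icc 0 R)) :
    gaussIntegral R ρ τ (fun x => f x + g x) =
      gaussIntegral R ρ τ f + gaussIntegral R ρ τ g := by
  simp only [gaussIntegral, add_mul]
  exact intervalIntegral.integral_add (intervalIntegrable_mul_heatKernel hR hτ hf)
    (intervalIntegrable_mul_heatKernel hR hτ hg)

theorem gaussIntegral_mono (hR : 0 ≤ R) (hτ : 0 < τ) (hf : ContinuousOn f (Icc 0 R))
    (hg : ContinuousOn g (Icc 0 R)) (hfg : ∀ x ∈ Ioo 0 R, f x ≤ g x) :
    gaussIntegral R ρ τ f ≤ gaussIntegral R ρ τ g :=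
  intervalIntegral.integral_mono_on_of_le_Ioo hR (intervalIntegrable_mul_heatKernel hR hτ hf)
    (intervalIntegrable_mul_heatKernel hR hτ hg)
    fun x hx => mul_le_mul_of_nonneg_right (hfg x hx) (heatKernel_pos hτ).le

theorem gaussIntegral_nonneg (hR : 0 ≤ R) (hτ : 0 < τ) (hf : ∀ x, 0 ≤ f x) :
    0 ≤ gaussIntegral R ρ τ f :=
  intervalIntegral.integral_nonneg hR fun x _ => mul_nonneg (hf x) (heatKernel_pos hτ).le

theorem gaussIntegral_le_div_sqrt {σ : ℝ} (hR : 0 ≤ R) (hσ : 0 < σ) (hστ : σ ≤ τ)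
    (hf : ContinuousOn f (Icc 0 R)) (hf0 : ∀ x, 0 ≤ f x) :
    gaussIntegral R ρ τ f ≤ (∫ x in (0 : ℝ)..R, f x) / √σ := by
  rw [div_eq_mul_one_div, ← intervalIntegral.integral_mul_const]
  exact intervalIntegral.integral_mono_on hR
    (intervalIntegrable_mul_heatKernel hR (hσ.trans_le hστ) hf)
    ((hf.intervalIntegrable_of_Icc hR).mul_const _)
    fun x _ => mul_le_mul_of_nonneg_left (heatKernel_le hσ hστ) (hf0 x)

theorem mul_integral_le_gaussIntegral {σ₀ σ₁ : ℝ} (hR : 0 ≤ R) (hρ : ρ ∈ Icc 0 R) (hσ : 0 < σ₀)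
    (h₀ : σ₀ ≤ τ) (h₁ : τ ≤ σ₁) (hf : ContinuousOn f (Icc 0 R)) (hf0 : ∀ x, 0 ≤ f x) :
    Real.exp (-(R ^ 2 / (4 * σ₀))) / √σ₁ * (∫ x in (0 : ℝ)..R, f x) ≤ gaussIntegral R ρ τ f := by
  rw [mul_comm, ← intervalIntegral.integral_mul_const]
  refine intervalIntegral.integral_mono_on hR ((hf.intervalIntegrable_of_Icc hR).mul_const _)
    (intervalIntegrable_mul_heatKernel hR (hσ.trans_le h₀) hf)
    fun x hx => mul_le_mul_of_nonneg_left (le_heatKernel hσ h₀ h₁ ?_) (hf0 x)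
  simpa using abs_sub_le_of_le_of_le hx.1 hx.2 hρ.1 hρ.2

theorem gaussIntegral_sq_le_of_abs_le_mul_pow {B : ℝ} {n : ℕ} (hR : 0 ≤ R) (hτ : 0 < τ)
    (hf : ContinuousOn f (Icc 0 R)) (hB : ∀ x ∈ Icc 0 R, |f x| ≤ B * |x - ρ| ^ n) :
    gaussIntegral R ρ τ (fun x => f x ^ 2) ≤ R * (B ^ 2 * (n.factorial * (4 * τ) ^ n / √τ)) := by
  have hle : ∀ x ∈ Icc 0 R,
      f x ^ 2 * heatKernel τ (x - ρ) ≤ B ^ 2 * (n.factorial * (4 * τ) ^ n / √τ) := by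
    intro x hx
    calc f x ^ 2 * heatKernel τ (x - ρ)
        ≤ (B * |x - ρ| ^ n) ^ 2 * heatKernel τ (x - ρ) := by
          have := (heatKernel_pos (z := x - ρ) hτ).le
          rw [← sq_abs (f x)]
          gcongr
          exact hB x hx
      _ = B ^ 2 * (((x - ρ) ^ 2) ^ n * heatKernel τ (x - ρ)) := by
          rw [mul_pow, pow_right_comm, sq_abs, mul_assoc]
      _ ≤ B ^ 2 * (n.factorial * (4 * τ) ^ n / √τ) := by
          gcongr
          exact pow_mul_heatKernel_le hτ n
  refine (intervalIntegral.integral_mono_on hR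
    (intervalIntegrable_mul_heatKernel hR hτ (hf.pow 2)) intervalIntegrable_const hle).trans_eq ?_
  rw [intervalIntegral.integral_const, sub_zero, smul_eq_mul]

theorem sq_gaussIntegral_mul_le (hR : 0 ≤ R) (hτ : 0 < τ) (hf : ContinuousOn f (Icc 0 R))
    (hg : ContinuousOn g (Icc 0 R)) :
    gaussIntegral R ρ τ (fun x => f x * g x) ^ 2 ≤
      gaussIntegral R ρ τ (fun x => f x ^ 2) * gaussIntegral R ρ τ (fun x => g x ^ 2) := by
  have hquad : ∀ y, 0 ≤ gaussIntegral R ρ τ (fun x => f x ^ 2) * (y * y) +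
      2 * gaussIntegral R ρ τ (fun x => f x * g x) * y +
      gaussIntegral R ρ τ (fun x => g x ^ 2) := by
    intro y
    have hexpand : (fun x => (y * f x + g x) ^ 2) =
        fun x => (y * y * f x ^ 2 + 2 * y * (f x * g x)) + g x ^ 2 := by funext x; ring
    have hsq : 0 ≤ gaussIntegral R ρ τ (fun x => (y * f x + g x) ^ 2) :=
      gaussIntegral_nonneg hR hτ fun x => sq_nonneg _
    rw [hexpand, gaussIntegral_add hR hτ (by fun_prop) (by fun_prop),
      gaussIntegral_add hR hτ (by fun_prop) (by fun_prop), gaussIntegral_const_mul,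
      gaussIntegral_const_mul] at hsq
    linarith
  have := discrim_le_zero hquad
  unfold discrim at this
  linarith

/-- Both factors on the left are compared with their mean, which is a single pairing
`∫ f (g + h) / 2`, before Cauchy–Schwarz is applied. -/
theorem gaussIntegral_mul_mul_gaussIntegral_mul_le (hR : 0 ≤ R) (hτ : 0 < τ)
    (hf : ContinuousOn f (Icc 0 R)) (hg : ContinuousOn g (Icc 0 R))
    (hh : ContinuousOn h (Icc 0 R)) :
    gaussIntegral R ρ τ (fun x => f x * g x) * gaussIntegral R ρ τ (fun x => f x * h x) ≤
      gaussIntegral R ρ τ (fun x => f x ^ 2) * (gaussIntegral R ρ τ (fun x => g x * h x) +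
        1 / 4 * gaussIntegral R ρ τ (fun x => (h x - g x) ^ 2)) := by
  have hcs := sq_gaussIntegral_mul_le (ρ := ρ) hR hτ hf (hg.add hh)
  have hlin : gaussIntegral R ρ τ (fun x => f x * (g x + h x)) =
      gaussIntegral R ρ τ (fun x => f x * g x) + gaussIntegral R ρ τ (fun x => f x * h x) := by
    rw [← gaussIntegral_add hR hτ (by fun_prop) (by fun_prop)]
    simp only [mul_add]
  have hpol : gaussIntegral R ρ τ (fun x => (g x + h x) ^ 2) =
      4 * gaussIntegral R ρ τ (fun x => g x * h x) +
        gaussIntegral R ρ τ (fun x => (h x - g x) ^ 2) := by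
    rw [← gaussIntegral_const_mul, ← gaussIntegral_add hR hτ (by fun_prop) (by fun_prop)]
    congr! 2 with x
    ring
  simp only [Pi.add_apply] at hcs
  rw [hlin, hpol] at hcs
  nlinarith [sq_nonneg (gaussIntegral R ρ τ (fun x => f x * g x) -
    gaussIntegral R ρ τ (fun x => f x * h x))]

theorem gaussIntegral_le_boundary {f' φ : ℝ → ℝ} (hR : 0 ≤ R) (hτ : 0 < τ)
    (hf : ContinuousOn f (Icc 0 R)) (hφ : ContinuousOn φ (Icc 0 R))
    (hf' : ∀ x ∈ Ioo 0 R, HasDerivAt f (f' x) x)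
    (hle : ∀ x ∈ Ioo 0 R, φ x ≤ f' x - (x - ρ) / (2 * τ) * f x) :
    gaussIntegral R ρ τ φ ≤ f R * heatKernel τ (R - ρ) - f 0 * heatKernel τ (0 - ρ) := by
  have hk : Continuous fun x => heatKernel τ (x - ρ) := continuous_heatKernel_sub hτ
  refine intervalIntegral.integral_le_sub_of_hasDeriv_right_of_le hR (hf.mul hk.continuousOn)
    (g' := fun x => (f' x - (x - ρ) / (2 * τ) * f x) * heatKernel τ (x - ρ))
    (fun x hx => ?_) (hφ.mul hk.continuousOn).integrableOn_Icc
    fun x hx => mul_le_mul_of_nonneg_right (hle x hx) (heatKernel_pos hτ).le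
  have hkx : HasDerivAt (fun x => heatKernel τ (x - ρ))
      (-((x - ρ) / (2 * τ)) * heatKernel τ (x - ρ)) x :=
    HasDerivAt.comp_sub_const x ρ hasDerivAt_heatKernel_space
  exact ((hf' x hx).mul hkx).hasDerivWithinAt.congr_deriv (by ring)

theorem gaussIntegral_eq_zero_of_hasDerivAt {f' φ : ℝ → ℝ} (hR : 0 ≤ R) (hτ : 0 < τ)
    (hf : ContinuousOn f (Icc 0 R)) (hφ : ContinuousOn φ (Icc 0 R))
    (hf' : ∀ x ∈ Ioo 0 R, HasDerivAt f (f' x) x)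
    (heq : ∀ x ∈ Ioo 0 R, f' x - (x - ρ) / (2 * τ) * f x = φ x) (h0 : f 0 = 0) (hfR : f R = 0) :
    gaussIntegral R ρ τ φ = 0 := by
  apply le_antisymm
  · simpa [h0, hfR] using gaussIntegral_le_boundary hR hτ hf hφ hf' fun x hx => (heq x hx).ge
  · have hneg := gaussIntegral_le_boundary (ρ := ρ) (φ := fun x => -1 * φ x) hR hτ hf.neg
      (by fun_prop) (fun x hx => (hf' x hx).neg)
      fun x hx => le_of_eq (by simp only [← heq x hx, Pi.neg_apply]; ring)
    rw [gaussIntegral_const_mul] at hneg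
    simpa [h0, hfR] using hneg

theorem hasDerivAt_gaussIntegral {F F' : ℝ → ℝ → ℝ} {J : Set ℝ} {T t : ℝ} (hR : 0 ≤ R)
    (hJ : IsOpen J) (hF : ContinuousOn (fun z : ℝ × ℝ => F z.1 z.2) (Icc 0 R ×ˢ J))
    (hF' : ContinuousOn (fun z : ℝ × ℝ => F' z.1 z.2) (Icc 0 R ×ˢ J))
    (hderiv : ∀ x ∈ Icc 0 R, ∀ t ∈ J, HasDerivAt (F x) (F' x t) t) (ht : t ∈ J) (htT : t < T) :
    HasDerivAt (fun t => gaussIntegral R ρ (T - t) fun x => F x t)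
      (gaussIntegral R ρ (T - t) fun x =>
        F' x t + (1 / (2 * (T - t)) - ((x - ρ) / (2 * (T - t))) ^ 2) * F x t) t := by
  have hk : ContinuousOn (fun z : ℝ × ℝ => heatKernel (T - z.2) (z.1 - ρ))
      (Icc 0 R ×ˢ (J ∩ Iio T)) :=
    continuousOn_heatKernel.comp (f := fun z : ℝ × ℝ => (T - z.2, z.1 - ρ)) (by fun_prop)
      fun z hz => ⟨mem_Ioi.2 (sub_pos.2 hz.2.2), trivial⟩
  have hsub : Icc 0 R ×ˢ (J ∩ Iio T) ⊆ Icc 0 R ×ˢ J := prod_mono_right inter_subset_left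
  replace hF := hF.mono hsub
  replace hF' := hF'.mono hsub
  have hT : ∀ z ∈ Icc 0 R ×ˢ (J ∩ Iio T), 2 * (T - z.2) ≠ 0 := fun z hz =>
    (mul_pos two_pos (sub_pos.2 hz.2.2)).ne'
  refine hasDerivAt_intervalIntegral_of_continuousOn (J := J ∩ Iio T) hR (hJ.inter isOpen_Iio)
    (F := fun x t => F x t * heatKernel (T - t) (x - ρ))
    (F' := fun x t => (F' x t + (1 / (2 * (T - t)) - ((x - ρ) / (2 * (T - t))) ^ 2) * F x t) *
      heatKernel (T - t) (x - ρ)) (hF.mul hk) ?_ (fun x hx s hs => ?_) ⟨ht, htT⟩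
  · fun_prop (disch := exact hT)
  · have hks : HasDerivAt (fun s => heatKernel (T - s) (x - ρ)) _ s :=
      (hasDerivAt_heatKernel_time (sub_pos.2 hs.2)).comp_const_sub T s
    exact ((hderiv x hx s hs.1).mul hks).congr_deriv (by ring)

end GaussIntegral

/-- A function `u x t` on `[0, R] × J`, vanishing with `u_x` at the singular point `x = 0`, together
with its derivatives `u_x`, `u_t`, `u_tx` and its image `Lu = u_xx - κ u / x²` under the Hardy
operator, in terms of which `u_xx` is expressed. Since `u 0 t / 0 = 0`, continuity of `u / x` on
`[0, R]` says that `u = o(x)`, and likewise for `u_t`. -/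
structure HardyJet (κ R : ℝ) (J : Set ℝ) where
  u : ℝ → ℝ → ℝ
  ux : ℝ → ℝ → ℝ
  Lu : ℝ → ℝ → ℝ
  ut : ℝ → ℝ → ℝ
  utx : ℝ → ℝ → ℝ
  u_zero : ∀ t ∈ J, u 0 t = 0
  ux_zero : ∀ t ∈ J, ux 0 t = 0
  hasDerivAt_u_space : ∀ t ∈ J, ∀ x ∈ Ioo 0 R, HasDerivAt (u · t) (ux x t) x
  hasDerivAt_ux_space : ∀ t ∈ J, ∀ x ∈ Ioo 0 R,
    HasDerivAt (ux · t) (Lu x t + κ * u x t / x ^ 2) x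
  hasDerivAt_ut_space : ∀ t ∈ J, ∀ x ∈ Ioo 0 R, HasDerivAt (ut · t) (utx x t) x
  hasDerivAt_u_time : ∀ x ∈ Icc 0 R, ∀ t ∈ J, HasDerivAt (u x) (ut x t) t
  hasDerivAt_ux_time : ∀ x ∈ Icc 0 R, ∀ t ∈ J, HasDerivAt (ux x) (utx x t) t
  continuousOn_u_div : ContinuousOn (fun z : ℝ × ℝ => u z.1 z.2 / z.1) (Icc 0 R ×ˢ J)
  continuousOn_ux : ContinuousOn (fun z : ℝ × ℝ => ux z.1 z.2) (Icc 0 R ×ˢ J)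
  continuousOn_Lu : ContinuousOn (fun z : ℝ × ℝ => Lu z.1 z.2) (Icc 0 R ×ˢ J)
  continuousOn_ut_div : ContinuousOn (fun z : ℝ × ℝ => ut z.1 z.2 / z.1) (Icc 0 R ×ˢ J)
  continuousOn_utx : ContinuousOn (fun z : ℝ × ℝ => utx z.1 z.2) (Icc 0 R ×ˢ J)

namespace HardyJet

variable {κ R : ℝ} {J : Set ℝ} (F : HardyJet κ R J)

/-- The Hardy energy density `u_x² + κ u² / x²`. -/
noncomputable def energy (x t : ℝ) : ℝ := F.ux x t ^ 2 + κ * (F.u x t / x) ^ 2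

/-- The time derivative of the Hardy energy density. -/
noncomputable def energyDeriv (x t : ℝ) : ℝ :=
  2 * F.ux x t * F.utx x t + 2 * κ * (F.u x t / x) * (F.ut x t / x)

/-- The operator `L - ξ ∂ₓ`, `ξ = (x - ρ) / (2(T - t))`, applied to `u`. It is symmetric with
respect to the heat kernel centred at `ρ`. -/
noncomputable def drift (ρ T x t : ℝ) : ℝ := F.Lu x t - (x - ρ) / (2 * (T - t)) * F.ux x t

/-- The derivative `∂ₜ - ξ ∂ₓ`, `ξ = (x - ρ) / (2(T - t))`, of `u` along the parabolas
`x - ρ = c √(T - t)`. -/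
noncomputable def selfSimilarDeriv (ρ T x t : ℝ) : ℝ :=
  F.ut x t - (x - ρ) / (2 * (T - t)) * F.ux x t

/-- The flux `2 u_x S + ξ E`, where `S` is the self-similar derivative, `E` the energy density and
`ξ = (x - ρ) / (2(T - t))`, whose weighted divergence governs the time derivative of the Dirichlet
integral. -/
noncomputable def flux (ρ T x t : ℝ) : ℝ :=
  2 * (F.ux x t * F.selfSimilarDeriv ρ T x t) + (x - ρ) / (2 * (T - t)) * F.energy x t

/-- Poon's weighted height `H(t) = ∫ u² k`, with `k` the backward heat kernel centred at
`(ρ, T)`. -/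
noncomputable def height (ρ T t : ℝ) : ℝ := gaussIntegral R ρ (T - t) fun x => F.u x t ^ 2

/-- Poon's weighted Dirichlet integral `D(t) = ∫ (u_x² + κ u² / x²) k`, with `k` the backward heat
kernel centred at `(ρ, T)`. -/
noncomputable def dirichlet (ρ T t : ℝ) : ℝ := gaussIntegral R ρ (T - t) fun x => F.energy x t

/-- At time `t` the forcing `u_t - Lu` is bounded by the Hardy energy density. -/
def ForcingBound (C t : ℝ) : Prop :=
  ∀ x ∈ Ioo 0 R, (F.ut x t - F.Lu x t) ^ 2 ≤ C * F.energy x t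

section Regularity

theorem ut_zero (hR : 0 ≤ R) (hJ : IsOpen J) {t : ℝ} (ht : t ∈ J) : F.ut 0 t = 0 :=
  eq_zero_of_hasDerivAt_of_eqOn_zero (F.hasDerivAt_u_time 0 (left_mem_Icc.2 hR) t ht)
    (hJ.mem_nhds ht) F.u_zero

theorem ut_right (hR : 0 ≤ R) (hJ : IsOpen J) (hbc : ∀ t ∈ J, F.u R t = 0) {t : ℝ} (ht : t ∈ J) :
    F.ut R t = 0 :=
  eq_zero_of_hasDerivAt_of_eqOn_zero (F.hasDerivAt_u_time R (right_mem_Icc.2 hR) t ht)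
    (hJ.mem_nhds ht) hbc

theorem continuousOn_u : ContinuousOn (fun z : ℝ × ℝ => F.u z.1 z.2) (Icc 0 R ×ˢ J) := by
  refine (continuousOn_fst.mul F.continuousOn_u_div).congr fun z hz => ?_
  rcases eq_or_ne z.1 0 with h | h
  · simp [h, F.u_zero _ hz.2]
  · simp only [Pi.mul_apply]
    field_simp

theorem continuousOn_ut (hR : 0 ≤ R) (hJ : IsOpen J) :
    ContinuousOn (fun z : ℝ × ℝ => F.ut z.1 z.2) (Icc 0 R ×ˢ J) := by
  refine (continuousOn_fst.mul F.continuousOn_ut_div).congr fun z hz => ?_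
  rcases eq_or_ne z.1 0 with h | h
  · simp [h, F.ut_zero hR hJ hz.2]
  · simp only [Pi.mul_apply]
    field_simp

theorem continuousOn_energy :
    ContinuousOn (fun z : ℝ × ℝ => F.energy z.1 z.2) (Icc 0 R ×ˢ J) :=
  (F.continuousOn_ux.pow 2).add ((F.continuousOn_u_div.pow 2).const_mul κ)

theorem continuousOn_energyDeriv :
    ContinuousOn (fun z : ℝ × ℝ => F.energyDeriv z.1 z.2) (Icc 0 R ×ˢ J) :=
  ((F.continuousOn_ux.const_mul 2).mul F.continuousOn_utx).add
    ((F.continuousOn_u_div.const_mul (2 * κ)).mul F.continuousOn_ut_div)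

theorem energy_nonneg (hκ : 0 ≤ κ) (x t : ℝ) : 0 ≤ F.energy x t := by
  unfold energy
  positivity

theorem hasDerivAt_energy {x t : ℝ} (hx : x ∈ Icc 0 R) (ht : t ∈ J) :
    HasDerivAt (F.energy x) (F.energyDeriv x t) t := by
  refine (((F.hasDerivAt_ux_time x hx t ht).fun_pow 2).fun_add
    ((((F.hasDerivAt_u_time x hx t ht).div_const x).fun_pow 2).const_mul κ)).congr_deriv ?_
  unfold energyDeriv
  push_cast
  ring

end Regularity

section WeightedIdentities

variable {ρ T t : ℝ}

theorem continuousOn_drift (ht : t ∈ J) :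
    ContinuousOn (fun x => F.drift ρ T x t) (Icc 0 R) := by
  have hux := continuousOn_slice F.continuousOn_ux ht
  have hLu := continuousOn_slice F.continuousOn_Lu ht
  unfold drift
  fun_prop

theorem continuousOn_selfSimilarDeriv (hR : 0 ≤ R) (hJ : IsOpen J) (ht : t ∈ J) :
    ContinuousOn (fun x => F.selfSimilarDeriv ρ T x t) (Icc 0 R) := by
  have hux := continuousOn_slice F.continuousOn_ux ht
  have hut := continuousOn_slice (F.continuousOn_ut hR hJ) ht
  unfold selfSimilarDeriv
  fun_prop

theorem height_nonneg (hR : 0 ≤ R) (htT : t < T) : 0 ≤ F.height ρ T t :=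
  gaussIntegral_nonneg hR (sub_pos.2 htT) fun _ => sq_nonneg _

theorem dirichlet_nonneg (hκ : 0 ≤ κ) (hR : 0 ≤ R) (htT : t < T) : 0 ≤ F.dirichlet ρ T t :=
  gaussIntegral_nonneg hR (sub_pos.2 htT) fun _ => F.energy_nonneg hκ _ _

theorem dirichlet_eq_neg_gaussIntegral (hR : 0 ≤ R) (hbc : ∀ t ∈ J, F.u R t = 0) (ht : t ∈ J)
    (htT : t < T) :
    F.dirichlet ρ T t = -gaussIntegral R ρ (T - t) fun x => F.u x t * F.drift ρ T x t := by
  have hτ : 0 < T - t := sub_pos.2 htT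
  have hu := continuousOn_slice F.continuousOn_u ht
  have hux := continuousOn_slice F.continuousOn_ux ht
  have hE := continuousOn_slice F.continuousOn_energy ht
  have hQ := F.continuousOn_drift (ρ := ρ) (T := T) ht
  have hzero : gaussIntegral R ρ (T - t)
      (fun x => F.energy x t + F.u x t * F.drift ρ T x t) = 0 := by
    refine gaussIntegral_eq_zero_of_hasDerivAt hR hτ (hu.mul hux) (by fun_prop)
      (fun x hx => (F.hasDerivAt_u_space t ht x hx).mul (F.hasDerivAt_ux_space t ht x hx))
      (fun x hx => ?_) (by simp [F.u_zero t ht]) (by simp [hbc t ht])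
    have := hx.1.ne'
    simp only [Pi.mul_apply, energy, drift]
    field_simp
    ring
  rw [gaussIntegral_add hR hτ hE (by fun_prop)] at hzero
  exact eq_neg_of_add_eq_zero_left hzero

theorem hasDerivAt_height (hR : 0 ≤ R) (hJ : IsOpen J) (hbc : ∀ t ∈ J, F.u R t = 0) (ht : t ∈ J)
    (htT : t < T) :
    HasDerivAt (F.height ρ T)
      (2 * gaussIntegral R ρ (T - t) fun x => F.u x t * F.selfSimilarDeriv ρ T x t) t := by
  have hτ : 0 < T - t := sub_pos.2 htT
  have hu := continuousOn_slice F.continuousOn_u ht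
  have hux := continuousOn_slice F.continuousOn_ux ht
  have hS := F.continuousOn_selfSimilarDeriv (ρ := ρ) (T := T) hR hJ ht
  have hder := hasDerivAt_gaussIntegral (ρ := ρ) (F' := fun x t => 2 * (F.u x t * F.ut x t)) hR hJ
    (F.continuousOn_u.pow 2) ((F.continuousOn_u.fun_mul (F.continuousOn_ut hR hJ)).const_mul 2)
    (fun x hx s hs => ((F.hasDerivAt_u_time x hx s hs).fun_pow 2).congr_deriv
      (by push_cast; ring)) ht htT
  refine hder.congr_deriv ?_
  have hzero : gaussIntegral R ρ (T - t) (fun x => F.u x t ^ 2 / (2 * (T - t)) +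
      2 * ((x - ρ) / (2 * (T - t))) * (F.u x t * F.ux x t) -
      ((x - ρ) / (2 * (T - t))) ^ 2 * F.u x t ^ 2) = 0 := by
    have hξ : ∀ x, HasDerivAt (fun x => (x - ρ) / (2 * (T - t))) (1 / (2 * (T - t))) x :=
      fun x => ((hasDerivAt_id x).sub_const ρ).div_const _
    refine gaussIntegral_eq_zero_of_hasDerivAt hR hτ
      (f := fun x => (x - ρ) / (2 * (T - t)) * F.u x t ^ 2) (by fun_prop) (by fun_prop)
      (fun x hx => (hξ x).fun_mul ((F.hasDerivAt_u_space t ht x hx).fun_pow 2))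
      (fun x _ => ?_) (by simp [F.u_zero t ht]) (by simp [hbc t ht])
    push_cast
    ring
  rw [← gaussIntegral_const_mul, ← add_zero (gaussIntegral R ρ (T - t) fun x => 2 * _), ← hzero,
    ← gaussIntegral_add hR hτ (by fun_prop) (by fun_prop)]
  congr! 2 with x
  simp only [selfSimilarDeriv]
  ring

theorem hasDerivAt_dirichlet (hR : 0 ≤ R) (hJ : IsOpen J) (ht : t ∈ J) (htT : t < T) :
    HasDerivAt (F.dirichlet ρ T)
      (gaussIntegral R ρ (T - t) fun x => F.energyDeriv x t +
        (1 / (2 * (T - t)) - ((x - ρ) / (2 * (T - t))) ^ 2) * F.energy x t) t :=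
  hasDerivAt_gaussIntegral hR hJ F.continuousOn_energy F.continuousOn_energyDeriv
    (fun _ hx _ hs => F.hasDerivAt_energy hx hs) ht htT

theorem hasDerivAt_energy_space {x : ℝ} (ht : t ∈ J) (hx : x ∈ Ioo 0 R) :
    HasDerivAt (F.energy · t) (2 * F.ux x t * (F.Lu x t + κ * F.u x t / x ^ 2) +
      2 * κ * (F.u x t / x) * ((F.ux x t * x - F.u x t) / x ^ 2)) x := by
  have hdiv : HasDerivAt (fun x => F.u x t / x) ((F.ux x t * x - F.u x t * 1) / x ^ 2) x :=
    (F.hasDerivAt_u_space t ht x hx).fun_div (hasDerivAt_id x) hx.1.ne'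
  refine (((F.hasDerivAt_ux_space t ht x hx).fun_pow 2).fun_add
    ((hdiv.fun_pow 2).const_mul κ)).congr_deriv ?_
  push_cast
  ring

theorem hasDerivAt_selfSimilarDeriv_space {x : ℝ} (ht : t ∈ J) (hx : x ∈ Ioo 0 R) :
    HasDerivAt (F.selfSimilarDeriv ρ T · t) (F.utx x t - (F.ux x t / (2 * (T - t)) +
      (x - ρ) / (2 * (T - t)) * (F.Lu x t + κ * F.u x t / x ^ 2))) x := by
  have hξ : HasDerivAt (fun x => (x - ρ) / (2 * (T - t))) (1 / (2 * (T - t))) x :=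
    ((hasDerivAt_id x).sub_const ρ).div_const _
  exact ((F.hasDerivAt_ut_space t ht x hx).fun_sub
    (hξ.fun_mul (F.hasDerivAt_ux_space t ht x hx))).congr_deriv (by ring)

theorem flux_zero (ht : t ∈ J) : F.flux ρ T 0 t = 0 := by
  simp [flux, energy, F.ux_zero t ht]

theorem flux_right_nonpos (hR : 0 ≤ R) (hJ : IsOpen J) (hbc : ∀ t ∈ J, F.u R t = 0) (hρ : ρ ≤ R)
    (ht : t ∈ J) (htT : t < T) : F.flux ρ T R t ≤ 0 := by
  have hξ : 0 ≤ (R - ρ) / (2 * (T - t)) :=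
    div_nonneg (sub_nonneg.2 hρ) (mul_pos two_pos (sub_pos.2 htT)).le
  have hflux : F.flux ρ T R t = -((R - ρ) / (2 * (T - t)) * F.ux R t ^ 2) := by
    simp only [flux, selfSimilarDeriv, energy, F.ut_right hR hJ hbc ht, hbc t ht]
    ring
  rw [hflux]
  exact neg_nonpos.2 (mul_nonneg hξ (sq_nonneg _))

/-- The two sides differ by the nonnegative term `ρ κ u² / (τ x³)`, which is singular at `x = 0`. -/
theorem exists_hasDerivAt_flux (hκ : 0 ≤ κ) (hρ : 0 ≤ ρ) {x : ℝ} (ht : t ∈ J) (htT : t < T)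
    (hx : x ∈ Ioo 0 R) :
    ∃ flux', HasDerivAt (F.flux ρ T · t) flux' x ∧
      F.energyDeriv x t + (1 / (2 * (T - t)) - ((x - ρ) / (2 * (T - t))) ^ 2) * F.energy x t +
        (2 * (F.drift ρ T x t * F.selfSimilarDeriv ρ T x t) + -(1 / (T - t)) * F.energy x t) ≤
      flux' - (x - ρ) / (2 * (T - t)) * F.flux ρ T x t := by
  have hξ : HasDerivAt (fun x => (x - ρ) / (2 * (T - t))) (1 / (2 * (T - t))) x :=
    ((hasDerivAt_id x).sub_const ρ).div_const _
  refine ⟨_, (((F.hasDerivAt_ux_space t ht x hx).fun_mul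
    (F.hasDerivAt_selfSimilarDeriv_space ht hx)).const_mul 2).fun_add
      (hξ.fun_mul (F.hasDerivAt_energy_space ht hx)), ?_⟩
  have hτ : 0 < T - t := sub_pos.2 htT
  have hx0 : 0 < x := hx.1
  have hpos : 0 ≤ ρ * κ * F.u x t ^ 2 / ((T - t) * x ^ 3) := by positivity
  rw [← sub_nonneg]
  refine hpos.trans_eq ?_
  simp only [flux, selfSimilarDeriv, drift, energy, energyDeriv]
  field_simp
  ring

theorem dirichlet_deriv_le (hκ : 0 ≤ κ) (hR : 0 ≤ R) (hJ : IsOpen J)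
    (hbc : ∀ t ∈ J, F.u R t = 0) (hρ : ρ ∈ Icc 0 R) (ht : t ∈ J) (htT : t < T) :
    (gaussIntegral R ρ (T - t) fun x => F.energyDeriv x t +
        (1 / (2 * (T - t)) - ((x - ρ) / (2 * (T - t))) ^ 2) * F.energy x t) ≤
      -2 * gaussIntegral R ρ (T - t) (fun x => F.drift ρ T x t * F.selfSimilarDeriv ρ T x t) +
        1 / (T - t) * F.dirichlet ρ T t := by
  have hτ : 0 < T - t := sub_pos.2 htT
  have hux := continuousOn_slice F.continuousOn_ux ht
  have hE := continuousOn_slice F.continuousOn_energy ht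
  have hEt := continuousOn_slice F.continuousOn_energyDeriv ht
  have hQ := F.continuousOn_drift (ρ := ρ) (T := T) ht
  have hS := F.continuousOn_selfSimilarDeriv (ρ := ρ) (T := T) hR hJ ht
  have hflux : ContinuousOn (F.flux ρ T · t) (Icc 0 R) := by
    unfold flux
    fun_prop
  choose! flux' hflux' hle using fun x hx => F.exists_hasDerivAt_flux hκ hρ.1 (x := x) ht htT hx
  have hbdry := gaussIntegral_le_boundary hR hτ hflux (by fun_prop) hflux' hle
  have hnonpos : F.flux ρ T R t * heatKernel (T - t) (R - ρ) ≤ 0 :=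
    mul_nonpos_of_nonpos_of_nonneg (F.flux_right_nonpos hR hJ hbc hρ.2 ht htT)
      (heatKernel_pos hτ).le
  rw [F.flux_zero ht, gaussIntegral_add hR hτ (by fun_prop) (by fun_prop),
    gaussIntegral_add (f := fun x => 2 * _) hR hτ (by fun_prop) (by fun_prop),
    gaussIntegral_const_mul, gaussIntegral_const_mul] at hbdry
  unfold dirichlet
  linarith

end WeightedIdentities

section Frequency

variable {F} {ρ T t C p q : ℝ}

theorem gaussIntegral_forcing_sq_le (hR : 0 ≤ R) (hJ : IsOpen J) (hF : F.ForcingBound C t)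
    (ht : t ∈ J) (htT : t < T) :
    gaussIntegral R ρ (T - t) (fun x => (F.selfSimilarDeriv ρ T x t - F.drift ρ T x t) ^ 2) ≤
      C * F.dirichlet ρ T t := by
  have hE := continuousOn_slice F.continuousOn_energy ht
  have hQ := F.continuousOn_drift (ρ := ρ) (T := T) ht
  have hS := F.continuousOn_selfSimilarDeriv (ρ := ρ) (T := T) hR hJ ht
  rw [dirichlet, ← gaussIntegral_const_mul]
  refine gaussIntegral_mono hR (sub_pos.2 htT) (by fun_prop) (by fun_prop) fun x hx => ?_
  simpa only [selfSimilarDeriv, drift, sub_sub_sub_cancel_right] using hF x hx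

theorem neg_dirichlet_le_gaussIntegral_mul (hR : 0 ≤ R) (hJ : IsOpen J) (hF : F.ForcingBound C t)
    (ht : t ∈ J) (htT : t < T) :
    -(C / 4 * F.dirichlet ρ T t) ≤
      gaussIntegral R ρ (T - t) fun x => F.drift ρ T x t * F.selfSimilarDeriv ρ T x t := by
  have hQ := F.continuousOn_drift (ρ := ρ) (T := T) ht
  have hS := F.continuousOn_selfSimilarDeriv (ρ := ρ) (T := T) hR hJ ht
  have hmono : gaussIntegral R ρ (T - t) (fun x =>
      -(1 / 4) * (F.selfSimilarDeriv ρ T x t - F.drift ρ T x t) ^ 2) ≤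
      gaussIntegral R ρ (T - t) fun x => F.drift ρ T x t * F.selfSimilarDeriv ρ T x t :=
    gaussIntegral_mono hR (sub_pos.2 htT) (by fun_prop) (by fun_prop) fun x _ => by
      linarith [sq_nonneg (F.selfSimilarDeriv ρ T x t + F.drift ρ T x t)]
  rw [gaussIntegral_const_mul] at hmono
  linarith [gaussIntegral_forcing_sq_le (ρ := ρ) hR hJ hF ht htT]

theorem abs_height_deriv_add_two_mul_dirichlet_le (hR : 0 ≤ R) (hJ : IsOpen J)
    (hbc : ∀ t ∈ J, F.u R t = 0) (hC : 0 < C) (hF : F.ForcingBound C t) (ht : t ∈ J)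
    (htT : t < T) :
    |2 * gaussIntegral R ρ (T - t) (fun x => F.u x t * F.selfSimilarDeriv ρ T x t) +
      2 * F.dirichlet ρ T t| ≤ C * F.height ρ T t + F.dirichlet ρ T t := by
  have hτ : 0 < T - t := sub_pos.2 htT
  have hu := continuousOn_slice F.continuousOn_u ht
  have hE := continuousOn_slice F.continuousOn_energy ht
  have hQ := F.continuousOn_drift (ρ := ρ) (T := T) ht
  have hS := F.continuousOn_selfSimilarDeriv (ρ := ρ) (T := T) hR hJ ht
  have hbound : ∀ c : ℝ, |c| = 2 → c * gaussIntegral R ρ (T - t) (fun x =>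
      F.u x t * (F.selfSimilarDeriv ρ T x t - F.drift ρ T x t)) ≤
      C * F.height ρ T t + F.dirichlet ρ T t := by
    intro c hc
    rw [height, dirichlet, ← gaussIntegral_const_mul, ← gaussIntegral_const_mul,
      ← gaussIntegral_add hR hτ (by fun_prop) (by fun_prop)]
    refine gaussIntegral_mono hR hτ (by fun_prop) (by fun_prop) fun x hx => ?_
    have hc2 : c ^ 2 = 4 := by rw [← sq_abs, hc]; norm_num
    have hf : (F.selfSimilarDeriv ρ T x t - F.drift ρ T x t) ^ 2 ≤ C * F.energy x t := by
      simpa only [selfSimilarDeriv, drift, sub_sub_sub_cancel_right] using hF x hx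
    nlinarith [sq_nonneg (2 * C * F.u x t - c * (F.selfSimilarDeriv ρ T x t - F.drift ρ T x t))]
  have hsplit : gaussIntegral R ρ (T - t)
      (fun x => F.u x t * (F.selfSimilarDeriv ρ T x t - F.drift ρ T x t)) =
      gaussIntegral R ρ (T - t) (fun x => F.u x t * F.selfSimilarDeriv ρ T x t) +
        F.dirichlet ρ T t := by
    rw [F.dirichlet_eq_neg_gaussIntegral hR hbc ht htT, ← neg_one_mul, ← gaussIntegral_const_mul,
      ← gaussIntegral_add hR hτ (by fun_prop) (by fun_prop)]
    congr! 2 with x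
    ring
  rw [hsplit] at hbound
  rw [abs_le]
  constructor
  · linarith [hbound (-2) (by norm_num)]
  · linarith [hbound 2 (by norm_num)]

theorem neg_dirichlet_mul_height_deriv_le (hR : 0 ≤ R) (hJ : IsOpen J)
    (hbc : ∀ t ∈ J, F.u R t = 0) (hF : F.ForcingBound C t) (ht : t ∈ J) (htT : t < T) :
    -(F.dirichlet ρ T t *
        (2 * gaussIntegral R ρ (T - t) fun x => F.u x t * F.selfSimilarDeriv ρ T x t)) ≤
      2 * F.height ρ T t * (gaussIntegral R ρ (T - t)
        (fun x => F.drift ρ T x t * F.selfSimilarDeriv ρ T x t) +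
          C / 4 * F.dirichlet ρ T t) := by
  have hcs := gaussIntegral_mul_mul_gaussIntegral_mul_le (ρ := ρ) hR (sub_pos.2 htT)
    (continuousOn_slice F.continuousOn_u ht) (F.continuousOn_drift (ρ := ρ) (T := T) ht)
    (F.continuousOn_selfSimilarDeriv (ρ := ρ) (T := T) hR hJ ht)
  have hforce := mul_le_mul_of_nonneg_left
    (gaussIntegral_forcing_sq_le (ρ := ρ) hR hJ hF ht htT) (F.height_nonneg (ρ := ρ) hR htT)
  rw [F.dirichlet_eq_neg_gaussIntegral hR hbc ht htT] at hforce ⊢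
  unfold height at hforce ⊢
  linarith

/-- The parameter `η` avoids dividing by a possibly vanishing height. -/
theorem frequency_le_exp_mul (hκ : 0 ≤ κ) (hR : 0 ≤ R) (hJ : IsOpen J)
    (hbc : ∀ t ∈ J, F.u R t = 0) (hρ : ρ ∈ Icc 0 R) (hpq : p ≤ q)
    (hsub : Icc p q ⊆ J) (hF : ∀ t ∈ Icc p q, F.ForcingBound C t) (hqT : q < T) {η : ℝ}
    (hη : 0 < η) :
    (T - q) * F.dirichlet ρ T q / (F.height ρ T q + η) ≤
      Real.exp (C / 2 * (q - p)) * ((T - p) * F.dirichlet ρ T p / (F.height ρ T p + η)) := by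
  have hT : ∀ t ∈ Icc p q, t < T := fun t ht => ht.2.trans_lt hqT
  refine div_le_exp_mul_div hpq
    (fun t ht => ((hasDerivAt_id t).const_sub T).fun_mul
      (F.hasDerivAt_dirichlet hR hJ (hsub ht) (hT t ht)))
    (fun t ht => (F.hasDerivAt_height hR hJ hbc (hsub ht) (hT t ht)).add_const η)
    (fun t ht => add_pos_of_nonneg_of_pos (F.height_nonneg hR (hT t ht)) hη) fun t ht => ?_
  have hτ : 0 < T - t := sub_pos.2 (hT t ht)
  have hD' := mul_le_mul_of_nonneg_left
    (F.dirichlet_deriv_le hκ hR hJ hbc hρ (hsub ht) (hT t ht)) hτ.le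
  have hQS := neg_dirichlet_le_gaussIntegral_mul (ρ := ρ) hR hJ (hF t ht) (hsub ht) (hT t ht)
  have hDH' := neg_dirichlet_mul_height_deriv_le (ρ := ρ) hR hJ hbc (hF t ht) (hsub ht) (hT t ht)
  have hH := F.height_nonneg (ρ := ρ) hR (hT t ht)
  have hD := F.dirichlet_nonneg (ρ := ρ) hκ hR (hT t ht)
  simp only [id_eq]
  generalize F.height ρ T t = H at *
  generalize F.dirichlet ρ T t = D at *
  generalize (gaussIntegral R ρ (T - t) fun x => F.drift ρ T x t * F.selfSimilarDeriv ρ T x t) = A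
    at *
  generalize (gaussIntegral R ρ (T - t) fun x => F.u x t * F.selfSimilarDeriv ρ T x t) = B at *
  generalize gaussIntegral R ρ (T - t) _ = D' at *
  have hτD : -1 * D + (T - t) * D' ≤ -2 * (T - t) * A := by
    rw [mul_add, ← mul_assoc, ← mul_assoc, mul_one_div_cancel hτ.ne'] at hD'
    linarith
  calc (-1 * D + (T - t) * D') * (H + η) - (T - t) * D * (2 * B)
      ≤ -2 * (T - t) * A * (H + η) + (T - t) * (2 * H * (A + C / 4 * D)) := by
        have := mul_le_mul_of_nonneg_right hτD (add_nonneg hH hη.le)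
        have := mul_le_mul_of_nonneg_left hDH' hτ.le
        linarith
    _ = (T - t) * (C / 2 * D * H + 2 * η * -A) := by ring
    _ ≤ (T - t) * (C / 2 * D * H + 2 * η * (C / 4 * D)) := by gcongr; linarith
    _ = C / 2 * ((T - t) * D) * H + C / 2 * ((T - t) * D) * η := by ring
    _ ≤ C / 2 * ((T - t) * D) * (H + η) := by rw [mul_add]

theorem height_le_exp_mul (hκ : 0 ≤ κ) (hR : 0 ≤ R) (hJ : IsOpen J)
    (hbc : ∀ t ∈ J, F.u R t = 0) (hC : 0 < C) (hpq : p ≤ q)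
    (hsub : Icc p q ⊆ J) (hF : ∀ t ∈ Icc p q, F.ForcingBound C t) (hqT : q < T) :
    F.height ρ T q ≤ Real.exp (C * (q - p)) * F.height ρ T p := by
  have hT : ∀ t ∈ Icc p q, t < T := fun t ht => ht.2.trans_lt hqT
  simpa using div_le_exp_mul_div hpq
    (fun t ht => F.hasDerivAt_height (ρ := ρ) hR hJ hbc (hsub ht) (hT t ht))
    (fun t _ => hasDerivAt_const t (1 : ℝ)) (fun _ _ => one_pos) fun t ht => by
      have := (abs_le.1 (abs_height_deriv_add_two_mul_dirichlet_le (ρ := ρ) hR hJ hbc hC (hF t ht)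
        (hsub ht) (hT t ht))).2
      linarith [F.dirichlet_nonneg (ρ := ρ) hκ hR (hT t ht)]

theorem mul_dirichlet_le_of_le (hκ : 0 ≤ κ) (hR : 0 ≤ R) (hJ : IsOpen J)
    (hbc : ∀ t ∈ J, F.u R t = 0) (hρ : ρ ∈ Icc 0 R) (hpq : p ≤ q)
    (hsub : Icc p q ⊆ J) (hF : ∀ t ∈ Icc p q, F.ForcingBound C t) (hqT : q < T) {N η : ℝ}
    (hN0 : 0 ≤ N) (hN : (T - p) * F.dirichlet ρ T p ≤ N * F.height ρ T p) (hη : 0 < η) :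
    (T - q) * F.dirichlet ρ T q ≤ Real.exp (C / 2 * (q - p)) * N * (F.height ρ T q + η) := by
  have hHp : 0 < F.height ρ T p + η :=
    add_pos_of_nonneg_of_pos (F.height_nonneg hR (hpq.trans_lt hqT)) hη
  have hHq : 0 < F.height ρ T q + η := add_pos_of_nonneg_of_pos (F.height_nonneg hR hqT) hη
  rw [← div_le_iff₀ hHq]
  refine (frequency_le_exp_mul hκ hR hJ hbc hρ hpq hsub hF hqT hη).trans ?_
  gcongr
  rw [div_le_iff₀ hHp]
  exact hN.trans (mul_le_mul_of_nonneg_left (le_add_of_nonneg_right hη.le) hN0)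

/-- A bound `N` on the initial frequency turns `H' ≥ -3D - CH` into `H' ≥ -K H / (T - t)`. -/
theorem neg_height_deriv_mul_le (hκ : 0 ≤ κ) (hR : 0 ≤ R) (hJ : IsOpen J)
    (hbc : ∀ t ∈ J, F.u R t = 0) (hρ : ρ ∈ Icc 0 R) (hC : 0 < C) (hpq : p ≤ q)
    (hsub : Icc p q ⊆ J) (hF : ∀ t ∈ Icc p q, F.ForcingBound C t) (hqT : q < T) {N K η : ℝ}
    (hN0 : 0 ≤ N) (hN : (T - p) * F.dirichlet ρ T p ≤ N * F.height ρ T p)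
    (hK : 3 * (Real.exp (C / 2 * (q - p)) * N) + C * (T - p) ≤ K) (hη : 0 < η) :
    (T - q) * -(2 * gaussIntegral R ρ (T - q) fun x => F.u x q * F.selfSimilarDeriv ρ T x q) ≤
      K * (F.height ρ T q + η) := by
  have hq : q ∈ Icc p q := right_mem_Icc.2 hpq
  have : 0 < T - q := sub_pos.2 hqT
  have hH := F.height_nonneg (ρ := ρ) hR hqT
  have hH' := (abs_le.1 (abs_height_deriv_add_two_mul_dirichlet_le (ρ := ρ) hR hJ hbc hC
    (hF q hq) (hsub hq) hqT)).1
  have hD := mul_dirichlet_le_of_le hκ hR hJ hbc hρ hpq hsub hF hqT hN0 hN hη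
  have hCH : C * (T - q) * F.height ρ T q ≤ C * (T - p) * (F.height ρ T q + η) := by
    have : 0 ≤ T - p := by linarith
    gcongr
    linarith
  calc (T - q) * -(2 * gaussIntegral R ρ (T - q) fun x => F.u x q * F.selfSimilarDeriv ρ T x q)
      ≤ (T - q) * (3 * F.dirichlet ρ T q + C * F.height ρ T q) := by gcongr; linarith
    _ = 3 * ((T - q) * F.dirichlet ρ T q) + C * (T - q) * F.height ρ T q := by ring
    _ ≤ 3 * (Real.exp (C / 2 * (q - p)) * N * (F.height ρ T q + η)) +
          C * (T - p) * (F.height ρ T q + η) :=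
        add_le_add (mul_le_mul_of_nonneg_left hD three_pos.le) hCH
    _ = (3 * (Real.exp (C / 2 * (q - p)) * N) + C * (T - p)) * (F.height ρ T q + η) := by ring
    _ ≤ K * (F.height ρ T q + η) := by gcongr

theorem add_height_mul_pow_le (hκ : 0 ≤ κ) (hR : 0 ≤ R) (hJ : IsOpen J)
    (hbc : ∀ t ∈ J, F.u R t = 0) (hρ : ρ ∈ Icc 0 R) (hC : 0 < C) (hpq : p ≤ q)
    (hsub : Icc p q ⊆ J) (hF : ∀ t ∈ Icc p q, F.ForcingBound C t) (hqT : q < T) {N η : ℝ}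
    (hN0 : 0 ≤ N) (hN : (T - p) * F.dirichlet ρ T p ≤ N * F.height ρ T p) {K : ℕ}
    (hK : 3 * (Real.exp (C / 2 * (q - p)) * N) + C * (T - p) ≤ K) (hη : 0 < η) :
    (F.height ρ T p + η) * (T - q) ^ K ≤ (F.height ρ T q + η) * (T - p) ^ K := by
  have hT : ∀ t ∈ Icc p q, t < T := fun t ht => ht.2.trans_lt hqT
  have hpos : ∀ t ∈ Icc p q, 0 < F.height ρ T t + η := fun t ht =>
    add_pos_of_nonneg_of_pos (F.height_nonneg hR (hT t ht)) hη
  have hpow : ∀ t ∈ Icc p q,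
      HasDerivAt (fun t => (T - t) ^ K) (-K * ((T - t) ^ K / (T - t))) t := by
    intro t ht
    refine (((hasDerivAt_id t).const_sub T).fun_pow K).congr_deriv ?_
    have := (sub_pos.2 (hT t ht)).ne'
    rcases K with _ | K
    · simp
    · rw [pow_succ, mul_div_cancel_right₀ _ this, Nat.add_sub_cancel, id_eq]
      ring
  have hratio := div_le_exp_mul_div (γ := 0) hpq hpow
    (fun t ht => (F.hasDerivAt_height hR hJ hbc (hsub ht) (hT t ht)).add_const η) hpos
    fun t ht => ?_
  · rwa [zero_mul, Real.exp_zero, one_mul, div_le_div_iff₀ (hpos q (right_mem_Icc.2 hpq))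
      (hpos p (left_mem_Icc.2 hpq)), mul_comm, mul_comm _ (F.height ρ T q + η)] at hratio
  · have hτ : 0 < T - t := sub_pos.2 (hT t ht)
    have hKt : 3 * (Real.exp (C / 2 * (t - p)) * N) + C * (T - p) ≤ K := by
      refine le_trans ?_ hK
      gcongr
      exact ht.2
    have hH' := mul_le_mul_of_nonneg_left
      (neg_height_deriv_mul_le hκ hR hJ hbc hρ hC ht.1 ((Icc_subset_Icc_right ht.2).trans hsub)
        (fun s hs => hF s ⟨hs.1, hs.2.trans ht.2⟩) (hT t ht) hN0 hN hKt hη)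
      (div_nonneg (pow_nonneg hτ.le K) hτ.le)
    rw [← mul_assoc, div_mul_cancel₀ _ hτ.ne'] at hH'
    linarith

theorem height_mul_pow_le (hκ : 0 ≤ κ) (hR : 0 ≤ R) (hJ : IsOpen J)
    (hbc : ∀ t ∈ J, F.u R t = 0) (hρ : ρ ∈ Icc 0 R) (hC : 0 < C) (hpq : p ≤ q)
    (hsub : Icc p q ⊆ J) (hF : ∀ t ∈ Icc p q, F.ForcingBound C t) (hqT : q < T) {N : ℝ}
    (hN0 : 0 ≤ N) (hN : (T - p) * F.dirichlet ρ T p ≤ N * F.height ρ T p) {K : ℕ}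
    (hK : 3 * (Real.exp (C / 2 * (q - p)) * N) + C * (T - p) ≤ K) :
    F.height ρ T p * (T - q) ^ K ≤ F.height ρ T q * (T - p) ^ K := by
  have hpow : 0 < (T - p) ^ K := pow_pos (sub_pos.2 (hpq.trans_lt hqT)) K
  refine le_of_forall_pos_le_add fun ε hε => ?_
  have hη := add_height_mul_pow_le hκ hR hJ hbc hρ hC hpq hsub hF hqT hN0 hN hK (div_pos hε hpow)
  calc F.height ρ T p * (T - q) ^ K
      ≤ (F.height ρ T p + ε / (T - p) ^ K) * (T - q) ^ K := by
        have := sub_pos.2 hqT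
        gcongr
        exact le_add_of_nonneg_right (by positivity)
    _ ≤ (F.height ρ T q + ε / (T - p) ^ K) * (T - p) ^ K := hη
    _ = F.height ρ T q * (T - p) ^ K + ε := by rw [add_mul, div_mul_cancel₀ _ hpow.ne']

end Frequency

section Uniqueness

/-- The forcing `u_t - Lu` is bounded by the Hardy energy density, with a constant that may depend
on the compact time interval. -/
def LocallyForced : Prop :=
  ∀ p q, Icc p q ⊆ J → ∃ C > 0, ∀ t ∈ Icc p q, F.ForcingBound C t

variable {F} {ρ T t p q : ℝ}

theorem integral_sq_pos (hR : 0 < R) (ht : t ∈ J) (hne : ∃ x ∈ Icc 0 R, F.u x t ≠ 0) :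
    0 < ∫ x in (0 : ℝ)..R, F.u x t ^ 2 := by
  obtain ⟨x, hx, hux⟩ := hne
  exact intervalIntegral.integral_pos hR ((continuousOn_slice F.continuousOn_u ht).pow 2)
    (fun _ _ => sq_nonneg _) ⟨x, hx, by positivity⟩

theorem eq_zero_of_height_eq_zero (hR : 0 < R) (hρ : ρ ∈ Icc 0 R) (ht : t ∈ J) (htT : t < T)
    (h0 : F.height ρ T t = 0) : ∀ x ∈ Icc 0 R, F.u x t = 0 := by
  by_contra! hne
  have hpos := integral_sq_pos hR ht hne
  have hτ := sub_pos.2 htT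
  have hle := mul_integral_le_gaussIntegral hR.le hρ hτ le_rfl le_rfl
    ((continuousOn_slice F.continuousOn_u ht).pow 2) fun _ => sq_nonneg _
  refine (hle.trans_eq h0).not_gt (mul_pos (div_pos (Real.exp_pos _) (Real.sqrt_pos.2 hτ)) hpos)

theorem eq_zero_of_le (hκ : 0 ≤ κ) (hR : 0 < R) (hJ : IsOpen J) (hbc : ∀ t ∈ J, F.u R t = 0)
    (hF : F.LocallyForced) (hpq : p ≤ q) (hsub : Icc p q ⊆ J) (h0 : ∀ x ∈ Icc 0 R, F.u x p = 0) :
    ∀ x ∈ Icc 0 R, F.u x q = 0 := by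
  obtain ⟨C, hC, hFC⟩ := hF p q hsub
  have hqT : q < q + 1 := lt_add_one q
  have hHp : F.height 0 (q + 1) p = 0 := by
    refine intervalIntegral.integral_zero_ae (.of_forall fun x hx => ?_)
    rw [uIoc_of_le hR.le] at hx
    simp [h0 x (Ioc_subset_Icc_self hx)]
  have hHq := height_le_exp_mul (ρ := 0) hκ hR.le hJ hbc hC hpq hsub hFC hqT
  rw [hHp, mul_zero] at hHq
  exact eq_zero_of_height_eq_zero hR (left_mem_Icc.2 hR.le) (hsub (right_mem_Icc.2 hpq)) hqT
    (hHq.antisymm (F.height_nonneg hR.le hqT))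

theorem exists_frequency_le (hκ : 0 ≤ κ) (hR : 0 < R) (hρ : ρ ∈ Icc 0 R) (hp : p ∈ J) (hpq : p < q)
    (hne : ∃ x ∈ Icc 0 R, F.u x p ≠ 0) :
    ∃ N c : ℝ, 0 ≤ N ∧ 0 < c ∧ ∀ T ∈ Ioc q (q + 1),
      (T - p) * F.dirichlet ρ T p ≤ N * F.height ρ T p ∧ c ≤ F.height ρ T p := by
  have hσ : 0 < q - p := sub_pos.2 hpq
  have hσ' : 0 < q + 1 - p := by linarith
  set c := Real.exp (-(R ^ 2 / (4 * (q - p)))) / √(q + 1 - p) * ∫ x in (0 : ℝ)..R, F.u x p ^ 2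
  have hc : 0 < c := mul_pos (by positivity) (integral_sq_pos hR hp hne)
  set d := (∫ x in (0 : ℝ)..R, F.energy x p) / √(q - p)
  have hd : 0 ≤ d := div_nonneg
    (intervalIntegral.integral_nonneg hR.le fun _ _ => F.energy_nonneg hκ _ _) (Real.sqrt_nonneg _)
  refine ⟨(q + 1 - p) * d / c, c, by positivity, hc, fun T hT => ?_⟩
  have hH : c ≤ F.height ρ T p :=
    mul_integral_le_gaussIntegral hR.le hρ hσ (by linarith [hT.1]) (by linarith [hT.2])
      ((continuousOn_slice F.continuousOn_u hp).pow 2) fun _ => sq_nonneg _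
  have hD : F.dirichlet ρ T p ≤ d :=
    gaussIntegral_le_div_sqrt hR.le hσ (by linarith [hT.1])
      (continuousOn_slice F.continuousOn_energy hp) fun _ => F.energy_nonneg hκ _ _
  refine ⟨?_, hH⟩
  calc (T - p) * F.dirichlet ρ T p ≤ (q + 1 - p) * d :=
        mul_le_mul (by linarith [hT.2]) hD (F.dirichlet_nonneg hκ hR.le (hpq.trans hT.1)) hσ'.le
    _ = (q + 1 - p) * d / c * c := (div_mul_cancel₀ _ hc.ne').symm
    _ ≤ (q + 1 - p) * d / c * F.height ρ T p := by gcongr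

theorem height_mul_le_mul_sqrt {B ε : ℝ} {K : ℕ} (hR : 0 ≤ R) (ht : t ∈ J) (hε : 0 < ε)
    (hB : ∀ x ∈ Icc 0 R, |F.u x t| ≤ B * |x - ρ| ^ (K + 1)) :
    F.height ρ (t + ε) t ≤ R * (B ^ 2 * ((K + 1).factorial * 4 ^ (K + 1))) * √ε * ε ^ K := by
  have hle := gaussIntegral_sq_le_of_abs_le_mul_pow hR hε
    (continuousOn_slice F.continuousOn_u ht) hB
  rw [height, add_sub_cancel_left]
  refine hle.trans_eq ?_
  rw [mul_pow 4 ε, pow_succ ε K]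
  nth_rw 2 [← Real.mul_self_sqrt hε.le]
  have := Real.sqrt_pos.2 hε
  field_simp

/-- Near the pole, the height decays at most polynomially in `T - t`, by the frequency bound, but
faster than every power when `u` is flat. -/
theorem eq_zero_of_flatWithinAt (hκ : 0 ≤ κ) (hR : 0 < R) (hJ : IsOpen J)
    (hbc : ∀ t ∈ J, F.u R t = 0) (hF : F.LocallyForced) (hρ : ρ ∈ Icc 0 R) (hpq : p < q)
    (hsub : Icc p q ⊆ J) (hflat : FlatWithinAt (F.u · q) (Icc 0 R) ρ) :
    ∀ x ∈ Icc 0 R, F.u x p = 0 := by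
  obtain ⟨C, hC, hFC⟩ := hF p q hsub
  by_contra! hne
  obtain ⟨N, c, hN0, hc, hN⟩ :=
    exists_frequency_le hκ hR hρ (hsub (left_mem_Icc.2 hpq.le)) hpq hne
  obtain ⟨K, hK⟩ := exists_nat_ge (3 * (Real.exp (C / 2 * (q - p)) * N) + C * (q + 1 - p))
  obtain ⟨B, hB⟩ := hflat (K + 1)
  set A := R * (B ^ 2 * ((K + 1).factorial * 4 ^ (K + 1))) * (q + 1 - p) ^ K
  have hle : ∀ ε ∈ Ioc (0 : ℝ) 1, c ≤ A * √ε := by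
    intro ε hε
    have hT : q + ε ∈ Ioc q (q + 1) := ⟨by linarith [hε.1], by linarith [hε.2]⟩
    have hdecay := height_mul_pow_le hκ hR.le hJ hbc hρ hC hpq.le hsub hFC hT.1 hN0 (hN _ hT).1
      (le_trans (by gcongr; exact hε.2) hK)
    refine le_of_mul_le_mul_right ?_ (pow_pos hε.1 K)
    calc c * ε ^ K ≤ F.height ρ (q + ε) p * (q + ε - q) ^ K := by
          rw [add_sub_cancel_left]
          exact mul_le_mul_of_nonneg_right (hN _ hT).2 (pow_nonneg hε.1.le K)
      _ ≤ F.height ρ (q + ε) q * (q + ε - p) ^ K := hdecay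
      _ ≤ R * (B ^ 2 * ((K + 1).factorial * 4 ^ (K + 1))) * √ε * ε ^ K * (q + 1 - p) ^ K := by
          have : 0 ≤ q + ε - p := by linarith [hε.1]
          have := hε.1
          gcongr
          · exact height_mul_le_mul_sqrt hR.le (hsub (right_mem_Icc.2 hpq.le)) hε.1 hB
          · exact hε.2
      _ = A * √ε * ε ^ K := by ring
  have hlim : Tendsto (fun ε => A * √ε) (𝓝[>] 0) (𝓝 0) := by
    simpa using (Real.continuous_sqrt.tendsto 0).mono_left nhdsWithin_le_nhds |>.const_mul A
  exact hc.not_ge (ge_of_tendsto hlim (mem_of_superset (Ioc_mem_nhdsGT one_pos) hle))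

end Uniqueness

section NonvanishingBoundary

/-- The jet of `(R - x) u`, which satisfies the boundary condition at `x = R` whatever the boundary
values of `u`. -/
noncomputable def mulDist (hR : 0 ≤ R) (hJ : IsOpen J) : HardyJet κ R J where
  u x t := (R - x) * F.u x t
  ux x t := (R - x) * F.ux x t - F.u x t
  Lu x t := (R - x) * F.Lu x t - 2 * F.ux x t
  ut x t := (R - x) * F.ut x t
  utx x t := (R - x) * F.utx x t - F.ut x t
  u_zero t ht := by rw [F.u_zero t ht, mul_zero]
  ux_zero t ht := by rw [F.ux_zero t ht, F.u_zero t ht, mul_zero, sub_zero]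
  hasDerivAt_u_space t ht x hx :=
    (((hasDerivAt_id x).const_sub R).fun_mul (F.hasDerivAt_u_space t ht x hx)).congr_deriv <| by
      rw [id_eq]; ring
  hasDerivAt_ux_space t ht x hx :=
    ((((hasDerivAt_id x).const_sub R).fun_mul (F.hasDerivAt_ux_space t ht x hx)).fun_sub
      (F.hasDerivAt_u_space t ht x hx)).congr_deriv <| by rw [id_eq]; ring
  hasDerivAt_ut_space t ht x hx :=
    (((hasDerivAt_id x).const_sub R).fun_mul (F.hasDerivAt_ut_space t ht x hx)).congr_deriv <| by
      rw [id_eq]; ring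
  hasDerivAt_u_time x hx t ht := (F.hasDerivAt_u_time x hx t ht).const_mul (R - x)
  hasDerivAt_ux_time x hx t ht :=
    ((F.hasDerivAt_ux_time x hx t ht).const_mul (R - x)).fun_sub (F.hasDerivAt_u_time x hx t ht)
  continuousOn_u_div := by
    have := F.continuousOn_u_div
    simp only [mul_div_assoc]
    fun_prop
  continuousOn_ux := by
    have := F.continuousOn_ux
    have := F.continuousOn_u
    fun_prop
  continuousOn_Lu := by
    have := F.continuousOn_ux
    have := F.continuousOn_Lu
    fun_prop
  continuousOn_ut_div := by
    have := F.continuousOn_ut_div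
    simp only [mul_div_assoc]
    fun_prop
  continuousOn_utx := by
    have := F.continuousOn_utx
    have := F.continuousOn_ut hR hJ
    fun_prop

variable {F} {p q : ℝ}

theorem sq_mulDist_ux_le_energy (hκ : 0 ≤ κ) (hR : 0 ≤ R) (hJ : IsOpen J) (x t : ℝ) :
    ((R - x) * F.ux x t - F.u x t) ^ 2 ≤ (F.mulDist hR hJ).energy x t :=
  le_add_of_nonneg_right (by positivity)

theorem sq_mul_u_le_energy_mulDist (hκ : 0 < κ) (hR : 0 ≤ R) (hJ : IsOpen J) {x t : ℝ}
    (hx : x ∈ Ioc 0 R) :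
    ((R - x) * F.u x t) ^ 2 ≤ R ^ 2 / κ * (F.mulDist hR hJ).energy x t := by
  have hx0 : 0 < x := hx.1
  have hquot : κ * ((R - x) * F.u x t / x) ^ 2 ≤ (F.mulDist hR hJ).energy x t :=
    le_add_of_nonneg_left (sq_nonneg _)
  calc ((R - x) * F.u x t) ^ 2 = x ^ 2 / κ * (κ * ((R - x) * F.u x t / x) ^ 2) := by field_simp
    _ ≤ R ^ 2 / κ * (F.mulDist hR hJ).energy x t := by
        gcongr
        exact hx.2

theorem exists_pos_le_energy_mulDist_add (hκ : 0 ≤ κ) (hR : 0 ≤ R) (hJ : IsOpen J)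
    (hsub : Icc p q ⊆ J) (hbc : ∀ t ∈ J, F.u R t ≠ 0) :
    ∃ δ, 0 < δ ∧ ∀ z ∈ Icc 0 R ×ˢ Icc p q,
      δ ≤ (F.mulDist hR hJ).energy z.1 z.2 + (R - z.1) ^ 2 := by
  have hE := (F.mulDist hR hJ).continuousOn_energy.mono (prod_mono_right hsub)
  refine (isCompact_Icc.prod isCompact_Icc).exists_forall_le' (by fun_prop) fun z hz => ?_
  rcases eq_or_ne z.1 R with h | h
  · have hu : 0 < F.u z.1 z.2 ^ 2 := sq_pos_of_ne_zero (h ▸ hbc z.2 (hsub hz.2))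
    have hle := F.sq_mulDist_ux_le_energy hκ hR hJ z.1 z.2
    rw [h, sub_self, zero_mul, zero_sub, even_two.neg_pow] at hle
    rw [h] at hu ⊢
    linarith [sq_nonneg (R - R)]
  · have := (F.mulDist hR hJ).energy_nonneg hκ z.1 z.2
    have := sub_ne_zero.2 h.symm
    positivity

theorem u_sq_mul_le_energy_mulDist (hκ : 0 < κ) (hR : 0 ≤ R) (hJ : IsOpen J) {x t δ M : ℝ}
    (hx : x ∈ Ioc 0 R) (hδ : δ ≤ (F.mulDist hR hJ).energy x t + (R - x) ^ 2)
    (hM : F.u x t ^ 2 ≤ M) :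
    F.u x t ^ 2 * δ ≤ (M + R ^ 2 / κ) * (F.mulDist hR hJ).energy x t := by
  have hE0 := (F.mulDist hR hJ).energy_nonneg hκ.le x t
  have hsu := F.sq_mul_u_le_energy_mulDist hκ hR hJ (t := t) hx
  generalize (F.mulDist hR hJ).energy x t = E at *
  calc F.u x t ^ 2 * δ ≤ F.u x t ^ 2 * (E + (R - x) ^ 2) := by gcongr
    _ = F.u x t ^ 2 * E + ((R - x) * F.u x t) ^ 2 := by ring
    _ ≤ M * E + R ^ 2 / κ * E := by gcongr
    _ = (M + R ^ 2 / κ) * E := by ring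

theorem ux_sq_mul_le_energy_mulDist (hκ : 0 ≤ κ) (hR : 0 ≤ R) (hJ : IsOpen J) {x t δ M : ℝ}
    (hδ : δ ≤ (F.mulDist hR hJ).energy x t + (R - x) ^ 2) (hM : F.ux x t ^ 2 ≤ M) :
    F.ux x t ^ 2 * δ ≤ (M + 2) * (F.mulDist hR hJ).energy x t + 2 * F.u x t ^ 2 := by
  have hE0 := (F.mulDist hR hJ).energy_nonneg hκ x t
  have hp := F.sq_mulDist_ux_le_energy hκ hR hJ x t
  generalize (F.mulDist hR hJ).energy x t = E at *
  calc F.ux x t ^ 2 * δ ≤ F.ux x t ^ 2 * (E + (R - x) ^ 2) := by gcongr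
    _ = F.ux x t ^ 2 * E + ((R - x) * F.ux x t - F.u x t + F.u x t) ^ 2 := by ring
    _ ≤ M * E + 2 * (((R - x) * F.ux x t - F.u x t) ^ 2 + F.u x t ^ 2) := by
        gcongr
        exact add_sq_le
    _ ≤ M * E + 2 * (E + F.u x t ^ 2) := by gcongr
    _ = (M + 2) * E + 2 * F.u x t ^ 2 := by ring

theorem exists_sq_le_energy_mulDist (hκ : 0 < κ) (hR : 0 ≤ R) (hJ : IsOpen J)
    (hsub : Icc p q ⊆ J) (hbc : ∀ t ∈ J, F.u R t ≠ 0) :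
    ∃ A, 0 < A ∧ ∀ t ∈ Icc p q, ∀ x ∈ Ioo 0 R,
      F.u x t ^ 2 ≤ A * (F.mulDist hR hJ).energy x t ∧
      F.ux x t ^ 2 ≤ A * (F.mulDist hR hJ).energy x t := by
  obtain ⟨δ, hδ, hGδ⟩ := F.exists_pos_le_energy_mulDist_add hκ.le hR hJ hsub hbc
  have hu := F.continuousOn_u.mono (prod_mono_right hsub)
  have hux := F.continuousOn_ux.mono (prod_mono_right hsub)
  obtain ⟨M, hM⟩ := (isCompact_Icc.prod isCompact_Icc).exists_bound_of_continuousOn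
    ((hu.pow 2).add (hux.pow 2))
  set A₀ := (|M| + R ^ 2 / κ) / δ
  refine ⟨A₀ + (|M| + 2 + 2 * A₀) / δ, by positivity, fun t ht x hx => ?_⟩
  have hE0 := (F.mulDist hR hJ).energy_nonneg hκ.le x t
  have hδE := hGδ (x, t) ⟨Ioo_subset_Icc_self hx, ht⟩
  have hMxt : F.u x t ^ 2 + F.ux x t ^ 2 ≤ |M| :=
    (le_abs_self _).trans ((hM (x, t) ⟨Ioo_subset_Icc_self hx, ht⟩).trans (le_abs_self M))
  have hu2 : F.u x t ^ 2 ≤ A₀ * (F.mulDist hR hJ).energy x t := by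
    rw [div_mul_eq_mul_div, le_div_iff₀ hδ]
    exact F.u_sq_mul_le_energy_mulDist hκ hR hJ (Ioo_subset_Ioc_self hx) hδE
      (by linarith [sq_nonneg (F.ux x t)])
  have hux2 : F.ux x t ^ 2 ≤ (|M| + 2 + 2 * A₀) / δ * (F.mulDist hR hJ).energy x t := by
    rw [div_mul_eq_mul_div, le_div_iff₀ hδ]
    linarith [F.ux_sq_mul_le_energy_mulDist hκ.le hR hJ hδE
      (le_trans (le_add_of_nonneg_left (sq_nonneg _)) hMxt)]
  rw [add_mul]
  exact ⟨hu2.trans (le_add_of_nonneg_right (by positivity)),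
    hux2.trans (le_add_of_nonneg_left (by positivity))⟩

theorem locallyForced_mulDist (hκ : 0 < κ) (hR : 0 ≤ R) (hJ : IsOpen J) (hF : F.LocallyForced)
    (hbc : ∀ t ∈ J, F.u R t ≠ 0) : (F.mulDist hR hJ).LocallyForced := by
  intro p q hsub
  obtain ⟨C, hC, hFC⟩ := hF p q hsub
  obtain ⟨A, hA, hAE⟩ := F.exists_sq_le_energy_mulDist hκ hR hJ hsub hbc
  refine ⟨4 * C + 4 * C * A + 8 * A, by positivity, fun t ht x hx => ?_⟩
  obtain ⟨hu, hux⟩ := hAE t ht x hx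
  have hE : (R - x) ^ 2 * F.energy x t ≤
      2 * (F.mulDist hR hJ).energy x t + 2 * F.u x t ^ 2 := by
    have hsq := sq_nonneg ((R - x) * F.ux x t - 2 * F.u x t)
    have hquot : 0 ≤ κ * ((R - x) * F.u x t / x) ^ 2 := by positivity
    simp only [energy, mulDist]
    linear_combination hsq + hquot
  have hf : (R - x) ^ 2 * (F.ut x t - F.Lu x t) ^ 2 ≤ C * ((R - x) ^ 2 * F.energy x t) := by
    rw [mul_left_comm]
    exact mul_le_mul_of_nonneg_left (hFC t ht x hx) (sq_nonneg _)
  have hCE := mul_le_mul_of_nonneg_left (hE.trans (add_le_add_right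
    (mul_le_mul_of_nonneg_left hu two_pos.le) _)) hC.le
  calc ((F.mulDist hR hJ).ut x t - (F.mulDist hR hJ).Lu x t) ^ 2
      = ((R - x) * (F.ut x t - F.Lu x t) + 2 * F.ux x t) ^ 2 := by simp only [mulDist]; ring
    _ ≤ 2 * (((R - x) * (F.ut x t - F.Lu x t)) ^ 2 + (2 * F.ux x t) ^ 2) := add_sq_le
    _ = 2 * ((R - x) ^ 2 * (F.ut x t - F.Lu x t) ^ 2) + 8 * F.ux x t ^ 2 := by ring
    _ ≤ (4 * C + 4 * C * A + 8 * A) * (F.mulDist hR hJ).energy x t := by linarith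

end NonvanishingBoundary

section UniqueContinuation

variable {F} {ρ q : ℝ}

theorem eq_zero_of_flatWithinAt_of_right_eq_zero (hκ : 0 ≤ κ) (hR : 0 < R) (hJ : IsOpen J)
    (hJc : J.OrdConnected) (hF : F.LocallyForced) (hbc : ∀ t ∈ J, F.u R t = 0)
    (hρ : ρ ∈ Icc 0 R) (hq : q ∈ J) (hflat : FlatWithinAt (F.u · q) (Icc 0 R) ρ) :
    ∀ t ∈ J, ∀ x ∈ Icc 0 R, F.u x t = 0 := by
  intro t ht
  obtain ⟨p, hp, hpJ⟩ := (hJ.eventually_mem (min_rec' (· ∈ J) hq ht)).exists_lt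
  have hpq : p < q := hp.trans_le (min_le_left q t)
  have hpt : p < t := hp.trans_le (min_le_right q t)
  exact F.eq_zero_of_le hκ hR hJ hbc hF hpt.le (hJc.out hpJ ht)
    (F.eq_zero_of_flatWithinAt hκ hR hJ hbc hF hρ hpq (hJc.out hpJ hq) hflat)

theorem not_flatWithinAt_of_right_ne_zero (hκ : 0 < κ) (hR : 0 < R) (hJ : IsOpen J)
    (hJc : J.OrdConnected) (hF : F.LocallyForced) (hbc : ∀ t ∈ J, F.u R t ≠ 0)
    (hρ : ρ ∈ Icc 0 R) (hq : q ∈ J) : ¬FlatWithinAt (F.u · q) (Icc 0 R) ρ := by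
  intro hflat
  have hdist : ∀ x ∈ Icc 0 R, |R - x| ≤ R := fun x hx => by
    simpa using abs_sub_le_of_le_of_le hR.le le_rfl hx.1 hx.2
  have hzero := eq_zero_of_flatWithinAt_of_right_eq_zero (F := F.mulDist hR.le hJ) hκ.le hR hJ hJc
    (F.locallyForced_mulDist hκ hR.le hJ hF hbc) (fun t _ => by simp [mulDist]) hρ hq
    (hflat.bdd_mul hdist) q hq
  have heq : EqOn (F.u · q) 0 (Ico 0 R) := fun x hx =>
    (mul_eq_zero.1 (hzero x (Ico_subset_Icc_self hx))).resolve_left (sub_pos.2 hx.2).ne'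
  refine hbc q hq (heq.of_subset_closure (continuousOn_slice F.continuousOn_u hq)
    continuousOn_const Ico_subset_Icc_self ?_ (right_mem_Icc.2 hR.le))
  rw [closure_Ico hR.ne]

end UniqueContinuation

end HardyJet

section PartialDerivatives

variable {E : Type*} [NormedAddCommGroup E] [NormedSpace ℝ E]

/-- The derivative of `f` within `S` in the direction `e`, which covers one-sided derivatives at the
boundary of `S`. -/
noncomputable def partialWithin (S : Set E) (e : E) (f : E → ℝ) (z : E) : ℝ :=
  fderivWithin ℝ f S z e

theorem contDiffOn_partialWithin {S : Set E} {f : E → ℝ} {k n : WithTop ℕ∞} (e : E)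
    (hS : UniqueDiffOn ℝ S) (hf : ContDiffOn ℝ n f S) (hkn : k + 1 ≤ n) :
    ContDiffOn ℝ k (partialWithin S e f) S :=
  (hf.fderivWithin hS hkn).clm_apply contDiffOn_const

theorem partialWithin_comm {S : Set E} {f : E → ℝ} {n : WithTop ℕ∞} {z : E}
    (hS : UniqueDiffOn ℝ S) (hf : ContDiffOn ℝ n f S) (hn : 2 ≤ n) (hz : z ∈ S)
    (hzS : z ∈ closure (interior S)) (d e : E) :
    partialWithin S d (partialWithin S e f) z = partialWithin S e (partialWithin S d f) z := by
  have hdiff : DifferentiableWithinAt ℝ (fderivWithin ℝ f S) S z :=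
    (hf.fderivWithin hS (m := 1) hn).differentiableOn one_ne_zero z hz
  have hsymm : IsSymmSndFDerivWithinAt ℝ f S z :=
    (hf z hz).isSymmSndFDerivWithinAt (by simpa using hn) hS hzS hz
  have happly : ∀ d e, partialWithin S d (partialWithin S e f) z =
      fderivWithin ℝ (fderivWithin ℝ f S) S z d e := fun d e => by
    unfold partialWithin
    rw [(hdiff.hasFDerivWithinAt.clm_apply (hasFDerivWithinAt_const e z S)).fderivWithin (hS z hz)]
    simp
  rw [happly, happly, hsymm d e]

variable {s J : Set ℝ} {f : ℝ × ℝ → ℝ} {x t : ℝ}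

theorem hasDerivWithinAt_partialWithin_fst (hf : DifferentiableOn ℝ f (s ×ˢ J)) (hx : x ∈ s)
    (ht : t ∈ J) :
    HasDerivWithinAt (fun x => f (x, t)) (partialWithin (s ×ˢ J) (1, 0) f (x, t)) s x :=
  have hline : HasDerivWithinAt (fun x => (x, t)) ((1 : ℝ), (0 : ℝ)) s x :=
    (hasDerivWithinAt_id x s).prodMk (hasDerivWithinAt_const x s t)
  have hmaps : MapsTo (fun x => (x, t)) s (s ×ˢ J) := fun _ hy => ⟨hy, ht⟩
  (hf (x, t) ⟨hx, ht⟩).hasFDerivWithinAt.comp_hasDerivWithinAt x hline hmaps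

theorem hasDerivAt_partialWithin_snd (hf : DifferentiableOn ℝ f (s ×ˢ J)) (hJ : IsOpen J)
    (hx : x ∈ s) (ht : t ∈ J) :
    HasDerivAt (fun t => f (x, t)) (partialWithin (s ×ˢ J) (0, 1) f (x, t)) t :=
  have hline : HasDerivWithinAt (fun t => (x, t)) ((0 : ℝ), (1 : ℝ)) J t :=
    (hasDerivWithinAt_const t J x).prodMk (hasDerivWithinAt_id t J)
  have hmaps : MapsTo (fun t => (x, t)) J (s ×ˢ J) := fun _ hy => ⟨hx, hy⟩
  ((hf (x, t) ⟨hx, ht⟩).hasFDerivWithinAt.comp_hasDerivWithinAt t hline hmaps).hasDerivAt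
    (hJ.mem_nhds ht)

end PartialDerivatives

section SpaceTimeJet

/-- A function `v r t` on `[0, R] × J` together with the partial derivatives that enter the radial
equation and its weighted energy identities. -/
structure SpaceTimeJet (R : ℝ) (J : Set ℝ) where
  v : ℝ → ℝ → ℝ
  vr : ℝ → ℝ → ℝ
  vt : ℝ → ℝ → ℝ
  vrr : ℝ → ℝ → ℝ
  vtr : ℝ → ℝ → ℝ
  hasDerivWithinAt_v : ∀ t ∈ J, ∀ r ∈ Icc 0 R, HasDerivWithinAt (v · t) (vr r t) (Icc 0 R) r
  hasDerivWithinAt_vr : ∀ t ∈ J, ∀ r ∈ Icc 0 R, HasDerivWithinAt (vr · t) (vrr r t) (Icc 0 R) r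
  hasDerivWithinAt_vt : ∀ t ∈ J, ∀ r ∈ Icc 0 R, HasDerivWithinAt (vt · t) (vtr r t) (Icc 0 R) r
  hasDerivAt_v : ∀ r ∈ Icc 0 R, ∀ t ∈ J, HasDerivAt (v r) (vt r t) t
  hasDerivAt_vr : ∀ r ∈ Icc 0 R, ∀ t ∈ J, HasDerivAt (vr r) (vtr r t) t
  continuousOn_v : ContinuousOn (fun z : ℝ × ℝ => v z.1 z.2) (Icc 0 R ×ˢ J)
  continuousOn_vr : ContinuousOn (fun z : ℝ × ℝ => vr z.1 z.2) (Icc 0 R ×ˢ J)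
  continuousOn_vt : ContinuousOn (fun z : ℝ × ℝ => vt z.1 z.2) (Icc 0 R ×ˢ J)
  continuousOn_vrr : ContinuousOn (fun z : ℝ × ℝ => vrr z.1 z.2) (Icc 0 R ×ˢ J)
  continuousOn_vtr : ContinuousOn (fun z : ℝ × ℝ => vtr z.1 z.2) (Icc 0 R ×ˢ J)

/-- The jet of a `C²` function. -/
noncomputable def SpaceTimeJet.ofContDiffOn {R : ℝ} {J : Set ℝ} (hR : 0 < R) (hJ : IsOpen J)
    (v : ℝ → ℝ → ℝ) (hv : ContDiffOn ℝ 2 (fun z : ℝ × ℝ => v z.1 z.2) (Icc 0 R ×ˢ J)) :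
    SpaceTimeJet R J :=
  let S := Icc 0 R ×ˢ J
  let f : ℝ × ℝ → ℝ := fun z => v z.1 z.2
  have hS : UniqueDiffOn ℝ S := (uniqueDiffOn_Icc hR).prod hJ.uniqueDiffOn
  have hd (e : ℝ × ℝ) : ContDiffOn ℝ 1 (partialWithin S e f) S :=
    contDiffOn_partialWithin e hS hv (by norm_num)
  have hdd (d e : ℝ × ℝ) : ContinuousOn (partialWithin S d (partialWithin S e f)) S :=
    (contDiffOn_partialWithin (k := 0) d hS (hd e) (by norm_num)).continuousOn
  { v := v
    vr := fun r t => partialWithin S (1, 0) f (r, t)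
    vt := fun r t => partialWithin S (0, 1) f (r, t)
    vrr := fun r t => partialWithin S (1, 0) (partialWithin S (1, 0) f) (r, t)
    vtr := fun r t => partialWithin S (1, 0) (partialWithin S (0, 1) f) (r, t)
    hasDerivWithinAt_v := fun _ ht _ hr =>
      hasDerivWithinAt_partialWithin_fst (hv.differentiableOn two_ne_zero) hr ht
    hasDerivWithinAt_vr := fun _ ht _ hr =>
      hasDerivWithinAt_partialWithin_fst ((hd _).differentiableOn one_ne_zero) hr ht
    hasDerivWithinAt_vt := fun _ ht _ hr =>
      hasDerivWithinAt_partialWithin_fst ((hd _).differentiableOn one_ne_zero) hr ht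
    hasDerivAt_v := fun _ hr _ ht =>
      hasDerivAt_partialWithin_snd (hv.differentiableOn two_ne_zero) hJ hr ht
    hasDerivAt_vr := fun r hr t ht => by
      have hclosure : (r, t) ∈ closure (interior S) := by
        rw [interior_prod_eq, interior_Icc, hJ.interior_eq, closure_prod_eq, closure_Ioo hR.ne]
        exact ⟨hr, subset_closure ht⟩
      rw [partialWithin_comm hS hv le_rfl ⟨hr, ht⟩ hclosure]
      exact hasDerivAt_partialWithin_snd ((hd _).differentiableOn one_ne_zero) hJ hr ht
    continuousOn_v := hv.continuousOn
    continuousOn_vr := (hd _).continuousOn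
    continuousOn_vt := (hd _).continuousOn
    continuousOn_vrr := hdd _ _
    continuousOn_vtr := hdd _ _ }

end SpaceTimeJet

section RemovableSingularity

variable {R s : ℝ} {J : Set ℝ}

theorem hasDerivAt_rpow_mul {f : ℝ → ℝ} {f' x : ℝ} (hx : 0 < x) (hf : HasDerivAt f f' x) :
    HasDerivAt (fun x => x ^ s * f x) (x ^ s * f' + s * (x ^ s * (f x / x))) x := by
  refine ((Real.hasDerivAt_rpow_const (.inl hx.ne')).fun_mul hf).congr_deriv ?_
  rw [Real.rpow_sub_one hx.ne']
  ring

theorem continuousOn_rpow_mul {h : ℝ × ℝ → ℝ} (hs : 0 < s) (hJ : IsOpen J)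
    (hh : ContinuousOn h (Ioc 0 R ×ˢ J))
    (hbdd : ∀ K ⊆ J, IsCompact K → ∃ M, ∀ z ∈ Ioc 0 R ×ˢ K, |h z| ≤ M) :
    ContinuousOn (fun z => z.1 ^ s * h z) (Icc 0 R ×ˢ J) := by
  have hpow : Continuous fun z : ℝ × ℝ => z.1 ^ s := continuous_fst.rpow_const fun _ => .inr hs.le
  rintro z ⟨hx, ht⟩
  rcases hx.1.eq_or_lt with h0 | hpos
  · obtain ⟨K, hK, htK, hKJ⟩ := exists_compact_subset hJ ht
    obtain ⟨M, hM⟩ := hbdd K hKJ hK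
    have hlim : Tendsto (fun y : ℝ × ℝ => y.1 ^ s * M) (𝓝[Icc 0 R ×ˢ J] z) (𝓝 0) := by
      simpa [← h0, Real.zero_rpow hs.ne'] using
        ((hpow.tendsto z).mul_const M).mono_left nhdsWithin_le_nhds
    rw [ContinuousWithinAt, ← h0, Real.zero_rpow hs.ne', zero_mul]
    refine squeeze_zero_norm' ?_ hlim
    filter_upwards [self_mem_nhdsWithin, mem_nhdsWithin_of_mem_nhds <|
      continuous_snd.continuousAt.preimage_mem_nhds (mem_interior_iff_mem_nhds.1 htK)] with y hy hyK
    rcases hy.1.1.eq_or_lt with hy0 | hy0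
    · simp [← hy0, Real.zero_rpow hs.ne']
    · rw [norm_mul, Real.norm_of_nonneg (by positivity)]
      gcongr
      exact hM y ⟨⟨hy0, hy.1.2⟩, hyK⟩
  · have hmem : Ioc 0 R ×ˢ J ∈ 𝓝[Icc 0 R ×ˢ J] z := by
      filter_upwards [self_mem_nhdsWithin, mem_nhdsWithin_of_mem_nhds <|
        continuous_fst.continuousAt.preimage_mem_nhds (Ioi_mem_nhds hpos)] with y hy hy0
      exact ⟨⟨hy0, hy.1.2⟩, hy.2⟩
    exact ((hpow.continuousOn.mul hh) z ⟨⟨hpos, hx.2⟩, ht⟩).mono_of_mem_nhdsWithin hmem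

theorem exists_abs_div_pow_le {g k : ℝ → ℝ → ℝ} {n : ℕ} {K : Set ℝ} (hK : IsCompact K)
    (hg0 : ∀ t ∈ K, g 0 t = 0)
    (hg : ∀ t ∈ K, ∀ r ∈ Icc 0 R, HasDerivWithinAt (g · t) (r ^ n * k r t) (Icc 0 R) r)
    (hk : ContinuousOn (fun z : ℝ × ℝ => k z.1 z.2) (Icc 0 R ×ˢ K)) :
    ∃ M, ∀ z ∈ Ioc 0 R ×ˢ K, |g z.1 z.2 / z.1 ^ (n + 1)| ≤ M := by
  obtain ⟨M, hM⟩ := (isCompact_Icc.prod hK).exists_bound_of_continuousOn hk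
  refine ⟨M, fun ⟨r, t⟩ ⟨hr, ht⟩ => ?_⟩
  have hr0 : 0 < r := hr.1
  have hsub : Icc 0 r ⊆ Icc 0 R := Icc_subset_Icc_right hr.2
  rw [abs_div, abs_of_pos (pow_pos hr0 _), div_le_iff₀ (pow_pos hr0 _), pow_succ', ← mul_assoc,
    mul_right_comm]
  refine abs_le_mul_of_abs_deriv_le (f' := fun y => y ^ n * k y t) hr0.le (hg0 t ht)
    (fun y hy => (hg t ht y (hsub hy)).mono hsub) fun y hy => ?_
  rw [abs_mul, mul_comm, abs_of_nonneg (pow_nonneg hy.1 n)]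
  exact mul_le_mul (hM (y, t) ⟨hsub hy, ht⟩) (pow_le_pow_left₀ hy.1 hy.2 n) (pow_nonneg hy.1 n)
    ((norm_nonneg _).trans (hM (y, t) ⟨hsub hy, ht⟩))

theorem continuousOn_rpow_mul_div_pow {g k : ℝ → ℝ → ℝ} {n : ℕ} (hs : 0 < s) (hJ : IsOpen J)
    (hg0 : ∀ t ∈ J, g 0 t = 0)
    (hg : ∀ t ∈ J, ∀ r ∈ Icc 0 R, HasDerivWithinAt (g · t) (r ^ n * k r t) (Icc 0 R) r)
    (hgc : ContinuousOn (fun z : ℝ × ℝ => g z.1 z.2) (Icc 0 R ×ˢ J))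
    (hk : ContinuousOn (fun z : ℝ × ℝ => k z.1 z.2) (Icc 0 R ×ˢ J)) :
    ContinuousOn (fun z : ℝ × ℝ => z.1 ^ s * (g z.1 z.2 / z.1 ^ (n + 1))) (Icc 0 R ×ˢ J) :=
  continuousOn_rpow_mul hs hJ
    ((hgc.mono (prod_mono_left Ioc_subset_Icc_self)).div (by fun_prop)
      fun _ hz => pow_ne_zero _ hz.1.1.ne')
    fun _ hKJ hK => exists_abs_div_pow_le hK (fun t ht => hg0 t (hKJ ht))
      (fun t ht => hg t (hKJ ht)) (hk.mono (prod_mono_right hKJ))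

end RemovableSingularity

namespace SpaceTimeJet

variable {R s : ℝ} {J : Set ℝ} (G : SpaceTimeJet R J)

theorem vt_zero (hR : 0 ≤ R) (hJ : IsOpen J) (hv0 : ∀ t ∈ J, G.v 0 t = 0) {t : ℝ} (ht : t ∈ J) :
    G.vt 0 t = 0 :=
  eq_zero_of_hasDerivAt_of_eqOn_zero (G.hasDerivAt_v 0 (left_mem_Icc.2 hR) t ht)
    (hJ.mem_nhds ht) hv0

theorem continuousOn_rpow_mul_v_div (hs : 0 < s) (hJ : IsOpen J) (hv0 : ∀ t ∈ J, G.v 0 t = 0) :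
    ContinuousOn (fun z : ℝ × ℝ => z.1 ^ s * (G.v z.1 z.2 / z.1)) (Icc 0 R ×ˢ J) := by
  simpa using continuousOn_rpow_mul_div_pow (n := 0) hs hJ hv0
    (by simpa using G.hasDerivWithinAt_v) G.continuousOn_v G.continuousOn_vr

theorem continuousOn_rpow_mul_vt_div (hs : 0 < s) (hR : 0 ≤ R) (hJ : IsOpen J)
    (hv0 : ∀ t ∈ J, G.v 0 t = 0) :
    ContinuousOn (fun z : ℝ × ℝ => z.1 ^ s * (G.vt z.1 z.2 / z.1)) (Icc 0 R ×ˢ J) := by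
  simpa using continuousOn_rpow_mul_div_pow (n := 0) hs hJ (fun t => G.vt_zero hR hJ hv0)
    (by simpa using G.hasDerivWithinAt_vt) G.continuousOn_vt G.continuousOn_vtr

theorem continuousOn_rpow_mul_radial (hs : 0 < s) (hJ : IsOpen J) (hv0 : ∀ t ∈ J, G.v 0 t = 0) :
    ContinuousOn (fun z : ℝ × ℝ => z.1 ^ s * ((z.1 * G.vr z.1 z.2 - G.v z.1 z.2) / z.1 ^ 2))
      (Icc 0 R ×ˢ J) := by
  refine continuousOn_rpow_mul_div_pow (n := 1) (g := fun r t => r * G.vr r t - G.v r t) hs hJ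
    (fun t ht => by simp [hv0 t ht]) (fun t ht r hr => ?_)
    ((continuousOn_fst.mul G.continuousOn_vr).sub G.continuousOn_v) G.continuousOn_vrr
  refine (((hasDerivWithinAt_id r _).fun_mul (G.hasDerivWithinAt_vr t ht r hr)).fun_sub
    (G.hasDerivWithinAt_v t ht r hr)).congr_deriv ?_
  rw [id_eq]
  ring

/-- The jet of `r ^ s * v`, `s = (m - 1) / 2`. The power removes the first-order term of the radial
Laplacian in dimension `m`, at the cost of a Hardy potential with coefficient `s (s + 1)`. -/
noncomputable def toHardyJet (hs : 0 < s) (hR : 0 ≤ R) (hJ : IsOpen J)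
    (hv0 : ∀ t ∈ J, G.v 0 t = 0) : HardyJet (s * (s + 1)) R J where
  u r t := r ^ s * G.v r t
  ux r t := r ^ s * G.vr r t + s * (r ^ s * (G.v r t / r))
  Lu r t := r ^ s * G.vrr r t + 2 * s * (r ^ s * ((r * G.vr r t - G.v r t) / r ^ 2))
  ut r t := r ^ s * G.vt r t
  utx r t := r ^ s * G.vtr r t + s * (r ^ s * (G.vt r t / r))
  u_zero t ht := by rw [hv0 t ht, mul_zero]
  ux_zero t _ := by simp [Real.zero_rpow hs.ne']
  hasDerivAt_u_space t ht r hr := hasDerivAt_rpow_mul hr.1 <|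
    (G.hasDerivWithinAt_v t ht r (Ioo_subset_Icc_self hr)).hasDerivAt (Icc_mem_nhds hr.1 hr.2)
  hasDerivAt_ux_space t ht r hr := by
    have hmem := Icc_mem_nhds hr.1 hr.2
    have hv := (G.hasDerivWithinAt_v t ht r (Ioo_subset_Icc_self hr)).hasDerivAt hmem
    have hvr := (G.hasDerivWithinAt_vr t ht r (Ioo_subset_Icc_self hr)).hasDerivAt hmem
    have hr0 : r ≠ 0 := hr.1.ne'
    refine ((hasDerivAt_rpow_mul hr.1 hvr).fun_add ((hasDerivAt_rpow_mul hr.1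
      (hv.fun_div (hasDerivAt_id r) hr0)).const_mul s)).congr_deriv ?_
    rw [id_eq]
    field_simp
    ring
  hasDerivAt_ut_space t ht r hr := hasDerivAt_rpow_mul hr.1 <|
    (G.hasDerivWithinAt_vt t ht r (Ioo_subset_Icc_self hr)).hasDerivAt (Icc_mem_nhds hr.1 hr.2)
  hasDerivAt_u_time r hr t ht := (G.hasDerivAt_v r hr t ht).const_mul (r ^ s)
  hasDerivAt_ux_time r hr t ht := ((G.hasDerivAt_vr r hr t ht).const_mul (r ^ s)).fun_add
    ((((G.hasDerivAt_v r hr t ht).div_const r).const_mul (r ^ s)).const_mul s)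
  continuousOn_u_div := by
    simpa only [mul_div_assoc] using G.continuousOn_rpow_mul_v_div hs hJ hv0
  continuousOn_ux :=
    ((continuousOn_fst.rpow_const fun _ _ => .inr hs.le).mul G.continuousOn_vr).add
      ((G.continuousOn_rpow_mul_v_div hs hJ hv0).const_mul s)
  continuousOn_Lu :=
    ((continuousOn_fst.rpow_const fun _ _ => .inr hs.le).mul G.continuousOn_vrr).add
      ((G.continuousOn_rpow_mul_radial hs hJ hv0).const_mul (2 * s))
  continuousOn_ut_div := by
    simpa only [mul_div_assoc] using G.continuousOn_rpow_mul_vt_div hs hR hJ hv0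
  continuousOn_utx :=
    ((continuousOn_fst.rpow_const fun _ _ => .inr hs.le).mul G.continuousOn_vtr).add
      ((G.continuousOn_rpow_mul_vt_div hs hR hJ hv0).const_mul s)

/-- The radial equation `v_t = v_rr + (m - 1) / r * v_r - b / r² * v` in the interior. -/
def SolvesRadial (m : ℝ) (b : ℝ → ℝ → ℝ) : Prop :=
  ∀ t ∈ J, ∀ r ∈ Ioo 0 R,
    G.vt r t = G.vrr r t + (m - 1) / r * G.vr r t - b r t / r ^ 2 * G.v r t

variable {G} {m : ℝ} {b : ℝ → ℝ → ℝ}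

theorem v_zero_of_solvesRadial (hG : G.SolvesRadial m b) (hR : 0 < R) (hm : m ≠ 1) {t : ℝ}
    (ht : t ∈ J) (hb : ContinuousOn (b · t) (Icc 0 R)) (hb0 : b 0 t = m - 1) : G.v 0 t = 0 := by
  have hv := continuousOn_slice G.continuousOn_v ht
  have hvr := continuousOn_slice G.continuousOn_vr ht
  have hvt := continuousOn_slice G.continuousOn_vt ht
  have hvrr := continuousOn_slice G.continuousOn_vrr ht
  have heq : EqOn (fun r => r ^ 2 * G.vt r t)
      (fun r => r ^ 2 * G.vrr r t + (m - 1) * (r * G.vr r t) - b r t * G.v r t) (Ioo 0 R) := by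
    intro r hr
    have hr0 : r ≠ 0 := hr.1.ne'
    simp only [hG t ht r hr]
    field_simp
  have hzero := heq.of_subset_closure (by fun_prop) (by fun_prop) Ioo_subset_Icc_self
    (closure_Ioo hR.ne).ge (left_mem_Icc.2 hR.le)
  simpa [hb0, sub_ne_zero.2 hm] using hzero

theorem locallyForced_toHardyJet (hG : G.SolvesRadial m b) (hm : 0 < (m - 1) / 2) (hR : 0 ≤ R)
    (hJ : IsOpen J) (hv0 : ∀ t ∈ J, G.v 0 t = 0)
    (hb : ∀ p q, Icc p q ⊆ J → ∃ C, ∀ t ∈ Icc p q, ∀ r ∈ Ioo 0 R, |(b r t - (m - 1)) / r| ≤ C) :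
    (G.toHardyJet hm hR hJ hv0).LocallyForced := by
  intro p q hsub
  obtain ⟨C, hC⟩ := hb p q hsub
  set κ := (m - 1) / 2 * ((m - 1) / 2 + 1)
  have hκ : 0 < κ := by positivity
  refine ⟨(C ^ 2 + 1) / κ, by positivity, fun t ht r hr => ?_⟩
  have hr0 : r ≠ 0 := hr.1.ne'
  set y := r ^ ((m - 1) / 2) * G.v r t / r
  have hforcing : (G.toHardyJet hm hR hJ hv0).ut r t - (G.toHardyJet hm hR hJ hv0).Lu r t =
      -((b r t - (m - 1)) / r * y) := by
    simp only [toHardyJet, hG t (hsub ht) r hr, y]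
    field_simp
    ring
  calc ((G.toHardyJet hm hR hJ hv0).ut r t - (G.toHardyJet hm hR hJ hv0).Lu r t) ^ 2
      = |(b r t - (m - 1)) / r| ^ 2 * y ^ 2 := by rw [hforcing, neg_sq, mul_pow, sq_abs]
    _ ≤ C ^ 2 * y ^ 2 := by
        gcongr
        exact hC t ht r hr
    _ ≤ (C ^ 2 + 1) * y ^ 2 := by
        gcongr
        exact le_add_of_nonneg_right zero_le_one
    _ = (C ^ 2 + 1) / κ * (κ * y ^ 2) := by field_simp
    _ ≤ (C ^ 2 + 1) / κ * (G.toHardyJet hm hR hJ hv0).energy r t := by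
        gcongr
        exact le_add_of_nonneg_left (sq_nonneg _)

end SpaceTimeJet

section RadialEquation

variable {R m : ℝ} {J : Set ℝ} {b v : ℝ → ℝ → ℝ}

theorem exists_abs_sub_div_le (hR : 0 < R) (hJ : IsOpen J)
    (hb : ContDiffOn ℝ 1 (fun z : ℝ × ℝ => b z.1 z.2) (Icc 0 R ×ˢ J))
    (hb0 : ∀ t ∈ J, b 0 t = m - 1) {p q : ℝ} (hsub : Icc p q ⊆ J) :
    ∃ C, ∀ t ∈ Icc p q, ∀ r ∈ Ioo 0 R, |(b r t - (m - 1)) / r| ≤ C := by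
  have hS : UniqueDiffOn ℝ (Icc 0 R ×ˢ J) := (uniqueDiffOn_Icc hR).prod hJ.uniqueDiffOn
  obtain ⟨C, hC⟩ := exists_abs_div_pow_le (n := 0) isCompact_Icc
    (g := fun r t => b r t - (m - 1)) (fun t ht => sub_eq_zero.2 (hb0 t (hsub ht)))
    (fun t ht r hr => by
      simpa using (hasDerivWithinAt_partialWithin_fst (hb.differentiableOn one_ne_zero) hr
        (hsub ht)).sub_const (m - 1))
    ((contDiffOn_partialWithin (k := 0) (1, 0) hS hb (by norm_num)).continuousOn.mono
      (prod_mono_right hsub))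
  exact ⟨C, fun t ht r hr => by simpa using hC (r, t) ⟨Ioo_subset_Ioc_self hr, ht⟩⟩

theorem solvesRadial_ofContDiffOn (hR : 0 < R) (hJ : IsOpen J)
    (hv : ContDiffOn ℝ 2 (fun z : ℝ × ℝ => v z.1 z.2) (Icc 0 R ×ˢ J))
    (hpde : ∀ r ∈ Ioo 0 R, ∀ t ∈ J, deriv (fun s => v r s) t =
      deriv (deriv (fun x => v x t)) r + (m - 1) / r * deriv (fun x => v x t) r -
        b r t / r ^ 2 * v r t) :
    (SpaceTimeJet.ofContDiffOn hR hJ v hv).SolvesRadial m b := by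
  intro t ht r hr
  set G := SpaceTimeJet.ofContDiffOn hR hJ v hv
  have hvr : ∀ r ∈ Ioo 0 R, deriv (fun x => v x t) r = G.vr r t := fun r hr =>
    ((G.hasDerivWithinAt_v t ht r (Ioo_subset_Icc_self hr)).hasDerivAt
      (Icc_mem_nhds hr.1 hr.2)).deriv
  have hvrr : deriv (deriv (fun x => v x t)) r = G.vrr r t :=
    (EventuallyEq.deriv_eq (by filter_upwards [Ioo_mem_nhds hr.1 hr.2] using hvr)).trans
      ((G.hasDerivWithinAt_vr t ht r (Ioo_subset_Icc_self hr)).hasDerivAt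
        (Icc_mem_nhds hr.1 hr.2)).deriv
  rw [← hvrr, ← hvr r hr, ← (G.hasDerivAt_v r (Ioo_subset_Icc_self hr) t ht).deriv]
  exact hpde r hr t ht

theorem exists_flatWithinAt_of_infinite (hR : 0 < R)
    (hv : ContDiffOn ℝ ∞ (fun z : ℝ × ℝ => v z.1 z.2) (Icc 0 R ×ˢ J)) {t : ℝ} (ht : t ∈ J)
    (hinf : {r ∈ Icc 0 R | v r t = 0}.Infinite) :
    ∃ ρ ∈ Icc 0 R, FlatWithinAt (v · t) (Icc 0 R) ρ := by
  obtain ⟨ρ, hρ, hacc⟩ := hinf.exists_accPt_of_subset_isCompact isCompact_Icc (sep_subset _ _)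
  have hslice : ContDiffOn ℝ ∞ (v · t) (Icc 0 R) :=
    hv.comp (f := fun r : ℝ => (r, t)) (by fun_prop) fun r hr => ⟨hr, ht⟩
  exact ⟨ρ, hρ, flatWithinAt_of_accPt_zeros hR hslice hacc⟩

end RadialEquation

theorem zero_number_finite_before_general {m R t1 t2 : ℝ} (hm : 1 < m) (hR : 0 < R)
    {b v : ℝ → ℝ → ℝ}
    (hb : ContDiffOn ℝ 1 (fun z : ℝ × ℝ => b z.1 z.2) (Icc 0 R ×ˢ Ioo t1 t2))
    (hb0 : ∀ t ∈ Ioo t1 t2, b 0 t = m - 1)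
    (hv : ContDiffOn ℝ ∞ (fun z : ℝ × ℝ => v z.1 z.2) (Icc 0 R ×ˢ Ioo t1 t2))
    (hpde : ∀ r ∈ Ioo 0 R, ∀ t ∈ Ioo t1 t2, deriv (fun s => v r s) t =
      deriv (deriv (fun x => v x t)) r + (m - 1) / r * deriv (fun x => v x t) r -
        b r t / r ^ 2 * v r t)
    (hbcR : (∀ t ∈ Ioo t1 t2, v R t = 0) ∨ ∀ t ∈ Ioo t1 t2, v R t ≠ 0)
    (hnz : ¬∀ r ∈ Icc 0 R, ∀ t ∈ Ioo t1 t2, v r t = 0) :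
    ∀ t ∈ Ioo t1 t2, {r ∈ Icc 0 R | v r t = 0}.Finite := by
  intro t ht
  by_contra hinf
  obtain ⟨ρ, hρ, hflat⟩ := exists_flatWithinAt_of_infinite hR hv ht hinf
  have hv2 := hv.of_le (m := 2) (by norm_cast)
  have hs : 0 < (m - 1) / 2 := half_pos (sub_pos.2 hm)
  have hG := solvesRadial_ofContDiffOn hR isOpen_Ioo hv2 hpde
  have hv0 : ∀ t ∈ Ioo t1 t2, v 0 t = 0 := fun t ht =>
    SpaceTimeJet.v_zero_of_solvesRadial hG hR hm.ne' ht (continuousOn_slice hb.continuousOn ht)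
      (hb0 t ht)
  set F := (SpaceTimeJet.ofContDiffOn hR isOpen_Ioo v hv2).toHardyJet hs hR.le isOpen_Ioo hv0
  have hF : F.LocallyForced := SpaceTimeJet.locallyForced_toHardyJet hG hs hR.le isOpen_Ioo hv0
    fun _ _ => exists_abs_sub_div_le hR isOpen_Ioo hb hb0
  have hκ : 0 < (m - 1) / 2 * ((m - 1) / 2 + 1) := by positivity
  have hFflat : FlatWithinAt (F.u · t) (Icc 0 R) ρ := hflat.bdd_mul (M := R ^ ((m - 1) / 2))
    fun r hr => by
      rw [abs_of_nonneg (by have := hr.1; positivity)]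
      exact Real.rpow_le_rpow hr.1 hr.2 hs.le
  rcases hbcR with hbc | hbc
  · have hzero := F.eq_zero_of_flatWithinAt_of_right_eq_zero hκ.le hR isOpen_Ioo ordConnected_Ioo hF
      (fun t ht => mul_eq_zero_of_right _ (hbc t ht)) hρ ht hFflat
    refine hnz fun r hr s hs => ?_
    rcases hr.1.eq_or_lt with rfl | hr0
    · exact hv0 s hs
    · exact (mul_eq_zero.1 (hzero s hs r hr)).resolve_left (by positivity)
  · exact F.not_flatWithinAt_of_right_ne_zero hκ hR isOpen_Ioo ordConnected_Ioo hF
      (fun t ht => mul_ne_zero (by positivity) (hbc t ht)) hρ ht hFflat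

theorem zero_number_finite_before
    (m : ℕ) (hm : 2 ≤ m) (R t1 t2 : ℝ) (hR : 0 < R) (ht12 : t1 < t2)
    (b v : ℝ → ℝ → ℝ)
    (hb_smooth : ContDiffOn ℝ (⊤ : ℕ∞) (fun p : ℝ × ℝ => b p.1 p.2) (Icc 0 R ×ˢ Ioo t1 t2))
    (hb_bdd : ∃ C : ℝ, ∀ r ∈ Icc (0:ℝ) R, ∀ t ∈ Ioo t1 t2, |b r t| ≤ C)
    (hb_deriv_bdd : ∃ C : ℝ, ∀ r ∈ Icc (0:ℝ) R, ∀ t ∈ Ioo t1 t2,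
      |deriv (fun x => b x t) r| ≤ C ∧ |deriv (fun s => b r s) t| ≤ C)
    (hb0 : ∀ t ∈ Ioo t1 t2, b 0 t = (m : ℝ) - 1)
    (hbr0 : ∀ t ∈ Ioo t1 t2, deriv (fun x => b x t) 0 = 0)
    (hv_smooth : ContDiffOn ℝ (⊤ : ℕ∞) (fun p : ℝ × ℝ => v p.1 p.2) (Icc 0 R ×ˢ Ioo t1 t2))
    (hpde : ∀ r ∈ Ioo (0:ℝ) R, ∀ t ∈ Ioo t1 t2,
      deriv (fun s => v r s) t =
        deriv (deriv (fun x => v x t)) r + (((m : ℝ) - 1) / r) * deriv (fun x => v x t) r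
          - (b r t / r ^ 2) * v r t)
    (hbc0 : (∀ t ∈ Ioo t1 t2, v 0 t = 0) ∨ (∀ t ∈ Ioo t1 t2, v 0 t ≠ 0))
    (hbcR : (∀ t ∈ Ioo t1 t2, v R t = 0) ∨ (∀ t ∈ Ioo t1 t2, v R t ≠ 0))
    (hnz : ¬ ∀ r ∈ Icc (0:ℝ) R, ∀ t ∈ Ioo t1 t2, v r t = 0)
    :
    ∀ t0 ∈ Ioo t1 t2, ∃ ε0 : ℝ, 0 < ε0 ∧ t1 < t0 - ε0 ∧
      ∀ t ∈ Ioo (t0 - ε0) t0, {r ∈ Icc (0:ℝ) R | v r t = 0}.Finite := by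
  have hb1 := hb_smooth.of_le (m := 1) (by norm_cast)
  exact fun t0 ht0 => ⟨(t0 - t1) / 2, by linarith [ht0.1], by linarith [ht0.1], fun t ht =>
    zero_number_finite_before_general (by exact_mod_cast hm) hR hb1 hb0 hv_smooth hpde hbcR hnz t
      ⟨by linarith [ht.1, ht0.1], ht.2.trans ht0.2⟩⟩
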